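/- arXiv:1705.03300 — 2 statements merged into one kernel-verified Lean document; each statement's English description precedes it below -/
import Mathlib

section
/- Let X be a set, H a Hilbert space, A ⊆ B(H) a non-degenerate C*-algebra, and φ : X×X → CB(A, B(H)) a bounded function. The following are equivalent: (i) φ is of positive type; (ii) φ is a Schur A-multiplier, S_φ is completely positive as a map from K(ℓ²(X))⊗A to K(ℓ²(X))⊗B(H), and ||S_φ||_cb = sup_{x∈X} ||φ(x,x)||_cb; (iii) there exist a Hilbert space K, a non-degenerate *-representation ρ : A → B(K), and a bounded function V : X → B(H,K) such that φ(x,y)(a) = V(x)* ρ(a) V(y) for all x,y ∈ X and a ∈ A. Moreover, if these conditions hold then the canonical extension of S_φ to a map on B(ℓ²(X)) ⊗̄ B(H) is also completely positive. -/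
noncomputable section

open scoped ComplexOrder
open Matrix
open scoped ENNReal

/-- Positivity of a matrix over a (possibly non-unital) C*-algebra:
`M` is positive iff it factors as `Nᴴ * N`. -/
def MatPos {R : Type*} [NonUnitalSemiring R] [StarRing R] {ν : Type*} [Fintype ν]
    (M : Matrix ν ν R) : Prop :=
  ∃ N : Matrix ν ν R, M = Nᴴ * N

/-- A linear map between C*-algebras is completely positive if all its matrix
amplifications preserve positivity. -/
def IsCompletelyPositive {R S : Type*} [NonUnitalSemiring R] [StarRing R] [Module ℂ R]
    [NonUnitalSemiring S] [StarRing S] [Module ℂ S] (Φ : R →ₗ[ℂ] S) : Prop :=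
  ∀ (n : ℕ) (M : Matrix (Fin n) (Fin n) R), MatPos M → MatPos (M.map Φ)

variable {H : Type*} [NormedAddCommGroup H] [InnerProductSpace ℂ H] [CompleteSpace H]

/-- The bounded operator on the Hilbert space `H ⊕₂ ⋯ ⊕₂ H` associated to an
operator-valued `n × n` matrix. -/
def matOp {ν : Type*} [Fintype ν] (M : Matrix ν ν (H →L[ℂ] H)) :
    PiLp 2 (fun _ : ν => H) →L[ℂ] PiLp 2 (fun _ : ν => H) :=
  ((PiLp.continuousLinearEquiv 2 ℂ (fun _ : ν => H)).symm :
      (∀ _ : ν, H) →L[ℂ] PiLp 2 (fun _ : ν => H)) ∘L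
    (ContinuousLinearMap.pi fun i =>
      (∑ j, (M i j) ∘L (ContinuousLinearMap.proj j)) ∘L
        ((PiLp.continuousLinearEquiv 2 ℂ (fun _ : ν => H)) :
          PiLp 2 (fun _ : ν => H) →L[ℂ] ∀ _ : ν, H))

variable {H : Type*} [NormedAddCommGroup H] [InnerProductSpace ℂ H] [CompleteSpace H]
variable {X : Type*}

/-- Evaluation at a point, as a continuous linear map `ℓ²(X,H) → H`. -/
def lpEval (x : X) : lp (fun _ : X => H) 2 →L[ℂ] H :=
  LinearMap.mkContinuous
    { toFun := fun f => f x
      map_add' := fun f g => by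
        have := lp.coeFn_add f g
        exact congrFun this x
      map_smul' := fun c f => by
        have := lp.coeFn_smul c f
        exact congrFun this x }
    1 (fun f => by
      simpa using lp.norm_apply_le_norm (by norm_num) f x)

/-- Inclusion of the `x`-th coordinate, as a continuous linear map `H → ℓ²(X,H)`. -/
def lpSingle (x : X) : H →L[ℂ] lp (fun _ : X => H) 2 := by
  classical
  exact LinearMap.mkContinuous
    { toFun := fun ξ => lp.single 2 x ξ
      map_add' := fun ξ η => by
        apply lp.ext
        funext j
        by_cases h : j = x
        · subst h; simp [lp.single_apply_self]
        · simp [lp.single_apply_ne _ _ _ h, lp.coeFn_add]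
      map_smul' := fun c ξ => by simp [lp.single_smul] }
    1 (fun ξ => by
      simpa using (lp.norm_single (p := 2) (by norm_num)
        (fun _ : X => ξ) x).le)

/-- The elementary operator `e_{x,y} ⊗ T` on `ℓ²(X,H)`. -/
def elemOp (x y : X) (T : H →L[ℂ] H) :
    lp (fun _ : X => H) 2 →L[ℂ] lp (fun _ : X => H) 2 :=
  (lpSingle x) ∘L T ∘L (lpEval y)

/-- The operator `T_k` on `ℓ²(X,H)` associated with a finitely supported kernel
`k : X × X → B(H)`; it is (defined to be) `0` if `k` is not finitely supported. -/
def TOp (k : X × X → (H →L[ℂ] H)) :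
    lp (fun _ : X => H) 2 →L[ℂ] lp (fun _ : X => H) 2 :=
  ∑ᶠ (p : X × X), elemOp p.1 p.2 (k p)

variable {G : Type*} [Group G]

/-- The left regular translation `λ_t` on `ℓ²(G,H)`. -/
def lam (t : G) : lp (fun _ : G => H) 2 →L[ℂ] lp (fun _ : G => H) 2 :=
  LinearMap.mkContinuous
    { toFun := fun f =>
        ⟨fun s => f (t⁻¹ * s), by
          apply memℓp_gen
          have hf : Summable fun s => ‖f s‖ ^ (2 : ℝ≥0∞).toReal :=
            (lp.memℓp f).summable (by norm_num)
          exact ((Equiv.mulLeft t⁻¹).summable_iff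
            (f := fun s => ‖f s‖ ^ (2 : ℝ≥0∞).toReal)).2 hf⟩
      map_add' := fun f g => by
        apply lp.ext; funext s
        exact congrFun (lp.coeFn_add f g) (t⁻¹ * s)
      map_smul' := fun c f => by
        apply lp.ext; funext s
        exact congrFun (lp.coeFn_smul c f) (t⁻¹ * s) }
    1 (fun f => by
      rw [one_mul]
      refine lp.norm_le_of_tsum_le (by norm_num) (norm_nonneg f) ?_
      have h1 : ∑' (s : G), ‖f (t⁻¹ * s)‖ ^ (2 : ℝ≥0∞).toReal
          = ∑' (s : G), ‖f s‖ ^ (2 : ℝ≥0∞).toReal :=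
        (Equiv.mulLeft t⁻¹).tsum_eq (fun s => ‖f s‖ ^ (2 : ℝ≥0∞).toReal)
      show ∑' (s : G), ‖f (t⁻¹ * s)‖ ^ (2 : ℝ≥0∞).toReal ≤ ‖f‖ ^ (2 : ℝ≥0∞).toReal
      rw [h1, ← lp.norm_rpow_eq_tsum (by norm_num) f])

/-- The diagonal ("block multiplication") operator on `ℓ²(X,H)` associated with a
uniformly bounded family of operators. -/
def diagOp (T : X → (H →L[ℂ] H)) (C : ℝ) (hC : ∀ x, ‖T x‖ ≤ C) :
    lp (fun _ : X => H) 2 →L[ℂ] lp (fun _ : X => H) 2 := by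
  have hC' : ∀ x, ‖T x‖ ≤ max C 0 := fun x => (hC x).trans (le_max_left _ _)
  have hr : (0:ℝ) < (2 : ℝ≥0∞).toReal := by norm_num
  have key : ∀ (f : lp (fun _ : X => H) 2) (x : X),
      ‖T x (f x)‖ ^ (2 : ℝ≥0∞).toReal
        ≤ (max C 0) ^ (2 : ℝ≥0∞).toReal * ‖f x‖ ^ (2 : ℝ≥0∞).toReal := by
    intro f x
    have h1 : ‖T x (f x)‖ ≤ max C 0 * ‖f x‖ :=
      ((T x).le_opNorm (f x)).trans
        (mul_le_mul_of_nonneg_right (hC' x) (norm_nonneg _))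
    calc ‖T x (f x)‖ ^ (2 : ℝ≥0∞).toReal
        ≤ (max C 0 * ‖f x‖) ^ (2 : ℝ≥0∞).toReal :=
          Real.rpow_le_rpow (norm_nonneg _) h1 hr.le
      _ = (max C 0) ^ (2 : ℝ≥0∞).toReal * ‖f x‖ ^ (2 : ℝ≥0∞).toReal :=
          Real.mul_rpow (le_max_right _ _) (norm_nonneg _)
  have mem : ∀ f : lp (fun _ : X => H) 2, Memℓp (fun x => T x (f x)) 2 := by
    intro f
    apply memℓp_gen
    exact Summable.of_nonneg_of_le
      (fun x => Real.rpow_nonneg (norm_nonneg _) _) (key f)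
      (((lp.memℓp f).summable hr).mul_left _)
  exact LinearMap.mkContinuous
    { toFun := fun f => ⟨fun x => T x (f x), mem f⟩
      map_add' := fun f g => by
        apply lp.ext; funext x
        have := congrFun (lp.coeFn_add f g) x
        show T x ((f + g) x) = _
        rw [this]
        exact map_add (T x) (f x) (g x)
      map_smul' := fun c f => by
        apply lp.ext; funext x
        have := congrFun (lp.coeFn_smul c f) x
        show T x ((c • f) x) = _
        rw [this]
        simp [lp.coeFn_smul] }
    (max C 0) (fun f => by
      refine lp.norm_le_of_tsum_le hr (by positivity) ?_
      show ∑' (x : X), ‖T x (f x)‖ ^ (2 : ℝ≥0∞).toReal ≤ _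
      calc ∑' (x : X), ‖T x (f x)‖ ^ (2 : ℝ≥0∞).toReal
          ≤ ∑' (x : X), (max C 0) ^ (2 : ℝ≥0∞).toReal * ‖f x‖ ^ (2 : ℝ≥0∞).toReal :=
            Summable.tsum_le_tsum (key f)
              (Summable.of_nonneg_of_le
                (fun x => Real.rpow_nonneg (norm_nonneg _) _) (key f)
                (((lp.memℓp f).summable hr).mul_left _))
              (((lp.memℓp f).summable hr).mul_left _)
        _ = (max C 0) ^ (2 : ℝ≥0∞).toReal * ∑' (x : X), ‖f x‖ ^ (2 : ℝ≥0∞).toReal :=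
            tsum_mul_left
        _ = (max C 0) ^ (2 : ℝ≥0∞).toReal * ‖f‖ ^ (2 : ℝ≥0∞).toReal := by
            rw [lp.norm_rpow_eq_tsum hr]
        _ = (max C 0 * ‖f‖) ^ (2 : ℝ≥0∞).toReal :=
            (Real.mul_rpow (by positivity) (norm_nonneg _)).symm)

section CB

variable {A' B' : Type*} [AddCommMonoid A'] [Module ℂ A'] [AddCommMonoid B'] [Module ℂ B']
variable {K : Type*} [NormedAddCommGroup K] [InnerProductSpace ℂ K] [CompleteSpace K]

/-- All matrix amplifications of `Φ` are bounded by `C`, where matrices over the abstract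
spaces are normed through the given embeddings into concrete operator algebras. -/
def CBBound (ιA : A' → (H →L[ℂ] H)) (ιB : B' → (K →L[ℂ] K))
    (Φ : A' →ₗ[ℂ] B') (C : ℝ) : Prop :=
  ∀ (n : ℕ) (M : Matrix (Fin n) (Fin n) A'),
    ‖matOp (M.map (fun a => ιB (Φ a)))‖ ≤ C * ‖matOp (M.map ιA)‖

/-- Complete boundedness of a linear map, relative to embeddings of its domain and
codomain into concrete operator algebras. -/
def IsCB (ιA : A' → (H →L[ℂ] H)) (ιB : B' → (K →L[ℂ] K)) (Φ : A' →ₗ[ℂ] B') : Prop :=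
  ∃ C : ℝ, 0 ≤ C ∧ CBBound ιA ιB Φ C

/-- The completely bounded norm of a linear map, relative to embeddings of its domain
and codomain into concrete operator algebras. -/
def cbNorm (ιA : A' → (H →L[ℂ] H)) (ιB : B' → (K →L[ℂ] K)) (Φ : A' →ₗ[ℂ] B') : ℝ :=
  sInf { C : ℝ | 0 ≤ C ∧ CBBound ιA ιB Φ C }

end CB

section Schur

variable {A : Type*} [NonUnitalCStarAlgebra A]

/-- A *-representation is non-degenerate if the span of the vectors in its range is dense. -/
def NondegenerateRep {K : Type*} [NormedAddCommGroup K] [InnerProductSpace ℂ K]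
    [CompleteSpace K] (ρ : A →⋆ₙₐ[ℂ] (K →L[ℂ] K)) : Prop :=
  Dense (Submodule.span ℂ {ξ : K | ∃ (a : A) (v : K), ρ a v = ξ} : Set K)

/-- A function `φ : X × X → CB(A, B(H))` is of positive type if it maps positive
matrices to positive matrices, entrywise. -/
def PositiveType (φ : X → X → (A →ₗ[ℂ] (H →L[ℂ] H))) : Prop :=
  ∀ (m : ℕ) (x : Fin m → X) (a : Matrix (Fin m) (Fin m) A),
    MatPos a → MatPos (Matrix.of fun p q => φ (x p) (x q) (a p q))

/-- A kernel `k : X × X → A` is positive definite if all the matrices obtained by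
sampling it at finitely many points are positive. -/
def PosDefKernel (k : X × X → A) : Prop :=
  ∀ (n : ℕ) (x : Fin n → X), MatPos (Matrix.of fun i j => k (x i, x j))

/-- The operator `T_k` on `ℓ²(X,H)` of a kernel `k : X × X → A`, via the embedding
`ι : A → B(H)` (it is `0` unless `k` is finitely supported). -/
def TKer (ι : A →⋆ₙₐ[ℂ] (H →L[ℂ] H)) (k : X × X → A) :
    lp (fun _ : X => H) 2 →L[ℂ] lp (fun _ : X => H) 2 :=
  TOp (fun p => ι (k p))

/-- `C` is a complete bound for the Schur multiplication map `S_φ : T_k ↦ T_{φ·k}`,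
tested on (matrices of) finitely supported kernels, which span a dense subspace of
`K(ℓ²(X)) ⊗ A`. -/
def SchurBound (ι : A →⋆ₙₐ[ℂ] (H →L[ℂ] H)) (φ : X → X → (A →ₗ[ℂ] (H →L[ℂ] H)))
    (C : ℝ) : Prop :=
  ∀ (n : ℕ) (k : Fin n → Fin n → (X × X → A)),
    (∀ i j, (Function.support (k i j)).Finite) →
    ‖matOp (Matrix.of fun i j => TOp (fun p => φ p.1 p.2 (k i j p)))‖
      ≤ C * ‖matOp (Matrix.of fun i j => TKer ι (k i j))‖

/-- `φ` is a Schur `A`-multiplier: the map `S_φ : T_k ↦ T_{φ·k}` is completely bounded. -/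
def IsSchurMultiplier (ι : A →⋆ₙₐ[ℂ] (H →L[ℂ] H))
    (φ : X → X → (A →ₗ[ℂ] (H →L[ℂ] H))) : Prop :=
  ∃ C : ℝ, 0 ≤ C ∧ SchurBound ι φ C

/-- The multiplier norm `‖φ‖_m = ‖S_φ‖_cb` of a Schur `A`-multiplier. -/
def schurNorm (ι : A →⋆ₙₐ[ℂ] (H →L[ℂ] H))
    (φ : X → X → (A →ₗ[ℂ] (H →L[ℂ] H))) : ℝ :=
  sInf { C : ℝ | 0 ≤ C ∧ SchurBound ι φ C }

/-- Complete positivity of the map `S_φ : K(ℓ²(X)) ⊗ A → K(ℓ²(X)) ⊗ B(H)`, tested on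
(matrices of) finitely supported kernels. -/
def SchurCP (ι : A →⋆ₙₐ[ℂ] (H →L[ℂ] H)) (φ : X → X → (A →ₗ[ℂ] (H →L[ℂ] H))) : Prop :=
  ∀ (n : ℕ) (k : Fin n → Fin n → (X × X → A)),
    (∀ i j, (Function.support (k i j)).Finite) →
    MatPos (Matrix.of fun i j => TKer ι (k i j)) →
    MatPos (Matrix.of fun i j => TOp (fun p => φ p.1 p.2 (k i j p)))

end Schur

section Dynamics

variable {A : Type*} [NonUnitalCStarAlgebra A]

/-- `α` is an action of the group `G` on `A` by *-automorphisms. -/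
def IsAction (α : G → A ≃⋆ₐ[ℂ] A) : Prop :=
  (∀ a, α 1 a = a) ∧ ∀ s t : G, ∀ a : A, α (s * t) a = α s (α t a)

/-- A *-automorphism of `A`, as a `ℂ`-linear map. -/
def autLin (e : A ≃⋆ₐ[ℂ] A) : A →ₗ[ℂ] A :=
  { toFun := e
    map_add' := fun a b => map_add e a b
    map_smul' := fun c a => map_smul e c a }

/-- The representation `π` of `A` on `ℓ²(G,H)`: `(π(a)ξ)(s) = α_{s⁻¹}(a)(ξ(s))`. -/
def piRep (ι : A →⋆ₙₐ[ℂ] (H →L[ℂ] H)) (α : G → A ≃⋆ₐ[ℂ] A) (a : A) :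
    lp (fun _ : G => H) 2 →L[ℂ] lp (fun _ : G => H) 2 :=
  diagOp (fun s => ι (α s⁻¹ a)) ‖a‖ (fun s =>
    (NonUnitalStarAlgHom.norm_apply_le ι (α s⁻¹ a)).trans_eq
      (StarAlgEquiv.norm_map (α s⁻¹) a))

/-- The reduced crossed product `A ⋊_{α,r} G`, realised concretely on `ℓ²(G,H)` as the
norm closure of the linear span of the operators `π(a)λ_t`. -/
def CrossedSet (ι : A →⋆ₙₐ[ℂ] (H →L[ℂ] H)) (α : G → A ≃⋆ₐ[ℂ] A) :
    Set (lp (fun _ : G => H) 2 →L[ℂ] lp (fun _ : G => H) 2) :=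
  closure (Submodule.span ℂ
    {x | ∃ (a : A) (t : G), x = piRep ι α a * lam t} : Set _)

/-- `E` is the canonical conditional expectation of the reduced crossed product onto `A`:
it is characterised by `ι (E x) = (x)_{e,e}`, the `(e,e)` matrix entry of `x`. -/
def IsCondExp (ι : A →⋆ₙₐ[ℂ] (H →L[ℂ] H)) (α : G → A ≃⋆ₐ[ℂ] A)
    (E : (lp (fun _ : G => H) 2 →L[ℂ] lp (fun _ : G => H) 2) →ₗ[ℂ] A) : Prop :=
  ∀ x ∈ CrossedSet ι α, ι (E x) = (lpEval (1 : G)) ∘L x ∘L (lpSingle (1 : G))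

/-- The defining property of the map `S_F` associated with `F : G → CB(A)`:
`S_F(π(a)λ_s) = π(F(s)(a))λ_s`. -/
def HSGenProp (ι : A →⋆ₙₐ[ℂ] (H →L[ℂ] H)) (α : G → A ≃⋆ₐ[ℂ] A)
    (F : G → (A →ₗ[ℂ] A))
    (Φ : (lp (fun _ : G => H) 2 →L[ℂ] lp (fun _ : G => H) 2) →ₗ[ℂ]
         (lp (fun _ : G => H) 2 →L[ℂ] lp (fun _ : G => H) 2)) : Prop :=
  ∀ (a : A) (s : G), Φ (piRep ι α a * lam s) = piRep ι α (F s a) * lam s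

/-- `Φ` maps the reduced crossed product into itself and, on matrices over the reduced
crossed product, all amplifications of `Φ` are bounded by `C`. -/
def CBBoundOnCrossed (ι : A →⋆ₙₐ[ℂ] (H →L[ℂ] H)) (α : G → A ≃⋆ₐ[ℂ] A)
    (Φ : (lp (fun _ : G => H) 2 →L[ℂ] lp (fun _ : G => H) 2) →ₗ[ℂ]
         (lp (fun _ : G => H) 2 →L[ℂ] lp (fun _ : G => H) 2)) (C : ℝ) : Prop :=
  ∀ (n : ℕ) (M : Matrix (Fin n) (Fin n)
      (lp (fun _ : G => H) 2 →L[ℂ] lp (fun _ : G => H) 2)),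
    (∀ i j, M i j ∈ CrossedSet ι α) →
      ‖matOp (M.map Φ)‖ ≤ C * ‖matOp M‖

/-- `Φ` is completely positive on the reduced crossed product: matrices over the crossed
product which are positive are mapped to positive matrices. -/
def CPOnCrossed (ι : A →⋆ₙₐ[ℂ] (H →L[ℂ] H)) (α : G → A ≃⋆ₐ[ℂ] A)
    (Φ : (lp (fun _ : G => H) 2 →L[ℂ] lp (fun _ : G => H) 2) →ₗ[ℂ]
         (lp (fun _ : G => H) 2 →L[ℂ] lp (fun _ : G => H) 2)) : Prop :=
  (∀ x ∈ CrossedSet ι α, Φ x ∈ CrossedSet ι α) ∧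
  ∀ (n : ℕ) (M : Matrix (Fin n) (Fin n)
      (lp (fun _ : G => H) 2 →L[ℂ] lp (fun _ : G => H) 2)),
    (∀ i j, M i j ∈ CrossedSet ι α) → MatPos M → MatPos (M.map Φ)

/-- `F : G → CB(A)` is a Herz-Schur `(A,G,α)`-multiplier: the map `S_F` determined by
`S_F(π(a)λ_s) = π(F(s)(a))λ_s` extends to a completely bounded map on `A ⋊_{α,r} G`. -/
def IsHerzSchurMultiplier (ι : A →⋆ₙₐ[ℂ] (H →L[ℂ] H)) (α : G → A ≃⋆ₐ[ℂ] A)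
    (F : G → (A →ₗ[ℂ] A)) : Prop :=
  ∃ Φ, HSGenProp ι α F Φ ∧ (∀ x ∈ CrossedSet ι α, Φ x ∈ CrossedSet ι α) ∧
    ∃ C : ℝ, 0 ≤ C ∧ CBBoundOnCrossed ι α Φ C

/-- `F : G → CB(A)` is a completely positive Herz-Schur `(A,G,α)`-multiplier: the map
`S_F` extends to a completely positive (hence completely bounded) map on `A ⋊_{α,r} G`. -/
def IsHerzSchurMultiplierCP (ι : A →⋆ₙₐ[ℂ] (H →L[ℂ] H)) (α : G → A ≃⋆ₐ[ℂ] A)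
    (F : G → (A →ₗ[ℂ] A)) : Prop :=
  ∃ Φ, HSGenProp ι α F Φ ∧ CPOnCrossed ι α Φ ∧
    ∃ C : ℝ, 0 ≤ C ∧ CBBoundOnCrossed ι α Φ C

/-- The function `N(F) : G × G → CB(A)`, `N(F)(s,t)(a) = α_{s⁻¹}(F(st⁻¹)(α_s(a)))`. -/
def NF (α : G → A ≃⋆ₐ[ℂ] A) (F : G → (A →ₗ[ℂ] A)) : G → G → (A →ₗ[ℂ] A) :=
  fun s t => (autLin (α s⁻¹)) ∘ₗ (F (s * t⁻¹)) ∘ₗ (autLin (α s))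

end Dynamics

section Trace

variable {A : Type*} [NonUnitalCStarAlgebra A]

/-- `τ` is a positive linear functional. -/
def IsPositiveFunctional (τ : A →ₗ[ℂ] ℂ) : Prop :=
  ∀ a : A, 0 ≤ τ (star a * a)

/-- `τ` is tracial. -/
def IsTracial (τ : A →ₗ[ℂ] ℂ) : Prop :=
  ∀ a b : A, τ (a * b) = τ (b * a)

/-- `τ` is faithful. -/
def IsFaithfulFunctional (τ : A →ₗ[ℂ] ℂ) : Prop :=
  ∀ a : A, τ (star a * a) = 0 → a = 0

/-- The `L²`-norm `‖a‖_{2,τ} = τ(a*a)^{1/2}` associated with a positive functional `τ`. -/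
def l2norm (τ : A →ₗ[ℂ] ℂ) (a : A) : ℝ :=
  Real.sqrt (τ (star a * a)).re

/-- A map `Φ : A → A` is `L²`-bounded by `C` with respect to `τ`. -/
def L2BoundedBy (τ : A →ₗ[ℂ] ℂ) (Φ : A →ₗ[ℂ] A) (C : ℝ) : Prop :=
  ∀ a : A, l2norm τ (Φ a) ≤ C * l2norm τ a

/-- A map `Φ : A → A` is `L²`-bounded with respect to `τ`, i.e. it extends to a bounded
operator `T_Φ` on `L²(A,τ)`. -/
def L2Bounded (τ : A →ₗ[ℂ] ℂ) (Φ : A →ₗ[ℂ] A) : Prop :=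
  ∃ C : ℝ, 0 ≤ C ∧ L2BoundedBy τ Φ C

/-- The norm of the extension `T_Φ` of `Φ` to `L²(A,τ)`. -/
def l2OpNorm (τ : A →ₗ[ℂ] ℂ) (Φ : A →ₗ[ℂ] A) : ℝ :=
  sInf { C : ℝ | 0 ≤ C ∧ L2BoundedBy τ Φ C }

/-- `Φ` is `L²`-compact with respect to `τ`: the image under `Φ` of the `L²`-unit ball of
`A` is totally bounded in the `L²`-norm; equivalently, the extension `T_Φ` of `Φ` to
`L²(A,τ)` is a compact operator. -/
def L2Compact (τ : A →ₗ[ℂ] ℂ) (Φ : A →ₗ[ℂ] A) : Prop :=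
  ∀ ε : ℝ, 0 < ε → ∃ S : Finset A, ∀ a : A, l2norm τ a ≤ 1 →
    ∃ b ∈ S, l2norm τ (Φ a - b) < ε

end Trace

section Props

variable {A : Type*} [CStarAlgebra A]

/-- The pair `(A,τ)` has the C*-algebra Haagerup property (Definition 3.1, Dong). -/
def CStarHaagerup (τ : A →ₗ[ℂ] ℂ) : Prop :=
  ∃ (I : Type) (_ : Nonempty I) (_ : SemilatticeSup I) (Φ : I → (A →ₗ[ℂ] A)),
    (∀ i, Φ i 1 = 1) ∧
    (∀ i, IsCompletelyPositive (Φ i)) ∧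
    (∀ i (a : A), τ (Φ i (star a * a)) ≤ τ (star a * a)) ∧
    (∀ i, L2Compact τ (Φ i)) ∧
    (∀ a : A, Filter.Tendsto (fun i => l2norm τ (Φ i a - a)) Filter.atTop (nhds 0))

/-- `A` is a nuclear C*-algebra: there is a net of finite-rank completely positive
contractions converging to the identity in the point-norm topology. -/
def NuclearCStarAlgebra (A : Type*) [NonUnitalCStarAlgebra A] : Prop :=
  ∃ (I : Type) (_ : Nonempty I) (_ : SemilatticeSup I) (Φ : I → (A →ₗ[ℂ] A)),
    (∀ i, IsCompletelyPositive (Φ i)) ∧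
    (∀ i (a : A), ‖Φ i a‖ ≤ ‖a‖) ∧
    (∀ i, FiniteDimensional ℂ (LinearMap.range (Φ i))) ∧
    (∀ a : A, Filter.Tendsto (fun i => ‖Φ i a - a‖) Filter.atTop (nhds 0))

/-- A discrete group `G` has the Haagerup property: there is a net of normalised
positive-definite functions on `G`, vanishing at infinity, converging pointwise to `1`. -/
def GroupHaagerup (G : Type*) [Group G] : Prop :=
  ∃ (I : Type) (_ : Nonempty I) (_ : SemilatticeSup I) (φ : I → G → ℂ),
    (∀ i, φ i 1 = 1) ∧
    (∀ i (n : ℕ) (s : Fin n → G) (μ : Fin n → ℂ),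
      0 ≤ ∑ k, ∑ l, (starRingEnd ℂ) (μ k) * φ i ((s k)⁻¹ * s l) * μ l) ∧
    (∀ i, ∀ ε : ℝ, 0 < ε → ∃ S : Finset G, ∀ s ∉ S, ‖φ i s‖ ≤ ε) ∧
    (∀ s : G, Filter.Tendsto (fun i => φ i s) Filter.atTop (nhds 1))

end Props

section More

variable {A : Type*} [NonUnitalCStarAlgebra A]

/-- A star homomorphism, as a `ℂ`-linear map. -/
def iotaLin {B : Type*} [NonUnitalCStarAlgebra B] (ι : A →⋆ₙₐ[ℂ] B) : A →ₗ[ℂ] B :=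
  { toFun := ι
    map_add' := fun a b => map_add ι a b
    map_smul' := fun c a => map_smul ι c a }

/-- A function `φ : X × X → CB(A)` with values in the maps on `A` is of positive type. -/
def PositiveTypeA (φ : X → X → (A →ₗ[ℂ] A)) : Prop :=
  ∀ (m : ℕ) (x : Fin m → X) (a : Matrix (Fin m) (Fin m) A),
    MatPos a → MatPos (Matrix.of fun p q => φ (x p) (x q) (a p q))

/-- The representation `π` of `A` on `ℓ²(G,H)`, as a linear map. -/
def piRepLin (ι : A →⋆ₙₐ[ℂ] (H →L[ℂ] H)) (α : G → A ≃⋆ₐ[ℂ] A) :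
    A →ₗ[ℂ] (lp (fun _ : G => H) 2 →L[ℂ] lp (fun _ : G => H) 2) :=
  { toFun := piRep ι α
    map_add' := fun a b => by
      apply ContinuousLinearMap.ext; intro f
      apply lp.ext; funext s
      have h1 : (((piRep ι α a + piRep ι α b) f :
          lp (fun _ : G => H) 2) : ∀ _ : G, H) s
          = ((piRep ι α a f : ∀ _ : G, H) s) + ((piRep ι α b f : ∀ _ : G, H) s) := by
        rw [ContinuousLinearMap.add_apply]
        exact congrFun (lp.coeFn_add (piRep ι α a f) (piRep ι α b f)) s
      show ι (α s⁻¹ (a + b)) (f s) = _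
      rw [h1]
      show _ = ι (α s⁻¹ a) (f s) + ι (α s⁻¹ b) (f s)
      rw [map_add (α s⁻¹), map_add ι, ContinuousLinearMap.add_apply]
    map_smul' := fun c a => by
      apply ContinuousLinearMap.ext; intro f
      apply lp.ext; funext s
      have h1 : (((c • piRep ι α a) f :
          lp (fun _ : G => H) 2) : ∀ _ : G, H) s
          = c • ((piRep ι α a f : ∀ _ : G, H) s) := by
        rw [ContinuousLinearMap.smul_apply]
        exact congrFun (lp.coeFn_smul c (piRep ι α a f)) s
      show ι (α s⁻¹ (c • a)) (f s) = _
      rw [RingHom.id_apply, h1]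
      show _ = c • ι (α s⁻¹ a) (f s)
      rw [map_smul (α s⁻¹), map_smul ι, ContinuousLinearMap.smul_apply] }

/-- The completely bounded norm of a map defined on the reduced crossed product. -/
def cbNormOnCrossed (ι : A →⋆ₙₐ[ℂ] (H →L[ℂ] H)) (α : G → A ≃⋆ₐ[ℂ] A)
    (Φ : (lp (fun _ : G => H) 2 →L[ℂ] lp (fun _ : G => H) 2) →ₗ[ℂ]
         (lp (fun _ : G => H) 2 →L[ℂ] lp (fun _ : G => H) 2)) : ℝ :=
  sInf { C : ℝ | 0 ≤ C ∧ CBBoundOnCrossed ι α Φ C }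

/-- The `L²`-norm `‖x‖_{2,τ'}` on the reduced crossed product induced by the trace
`τ' = τ ∘ E`. -/
def l2normCr (τ : A →ₗ[ℂ] ℂ)
    (E : (lp (fun _ : G => H) 2 →L[ℂ] lp (fun _ : G => H) 2) →ₗ[ℂ] A)
    (x : lp (fun _ : G => H) 2 →L[ℂ] lp (fun _ : G => H) 2) : ℝ :=
  Real.sqrt (τ (E (star x * x))).re

/-- The map `h_Φ : G → CB(A)` associated with a map `Φ` on the reduced crossed product:
`h_Φ(s)(a) = E(Φ(π(a)λ_s)λ_s*)`. -/
def hMap (ι : A →⋆ₙₐ[ℂ] (H →L[ℂ] H)) (α : G → A ≃⋆ₐ[ℂ] A)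
    (E : (lp (fun _ : G => H) 2 →L[ℂ] lp (fun _ : G => H) 2) →ₗ[ℂ] A)
    (Φ : (lp (fun _ : G => H) 2 →L[ℂ] lp (fun _ : G => H) 2) →ₗ[ℂ]
         (lp (fun _ : G => H) 2 →L[ℂ] lp (fun _ : G => H) 2))
    (s : G) : A →ₗ[ℂ] A :=
  E ∘ₗ (LinearMap.mulRight ℂ (star (lam s))) ∘ₗ Φ ∘ₗ
    (LinearMap.mulRight ℂ (lam (H := H) s)) ∘ₗ piRepLin ι α

end More

section BigProps

open Filter

variable {A : Type*} [CStarAlgebra A]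

/-- The Haagerup property for the `C*`-dynamical system `(A,G,α,τ)` (Definition 3.3). -/
def DynHaagerup (ι : A →⋆ₙₐ[ℂ] (H →L[ℂ] H)) (α : G → A ≃⋆ₐ[ℂ] A)
    (τ : A →ₗ[ℂ] ℂ) : Prop :=
  ∃ (I : Type) (_ : Nonempty I) (_ : SemilatticeSup I) (F : I → G → (A →ₗ[ℂ] A)),
    (∀ i, IsHerzSchurMultiplierCP ι α (F i)) ∧
    (∀ i, F i 1 1 = 1) ∧
    (∀ i (a : A), τ (F i 1 (star a * a)) ≤ τ (star a * a)) ∧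
    (∀ i (t : G), L2Compact τ (F i t)) ∧
    (∀ i, ∀ ε : ℝ, 0 < ε → ∃ S : Finset G, ∀ s ∉ S, l2OpNorm τ (F i s) ≤ ε) ∧
    (∀ (t : G) (a : A),
      Tendsto (fun i => l2norm τ (F i t a - a)) atTop (nhds 0))

/-- The C*-algebra Haagerup property for the reduced crossed product `A ⋊_{α,r} G`
endowed with the induced trace `τ' = τ ∘ E` (Definition 3.1). -/
def CrossedCStarHaagerup (ι : A →⋆ₙₐ[ℂ] (H →L[ℂ] H)) (α : G → A ≃⋆ₐ[ℂ] A)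
    (τ : A →ₗ[ℂ] ℂ)
    (E : (lp (fun _ : G => H) 2 →L[ℂ] lp (fun _ : G => H) 2) →ₗ[ℂ] A) : Prop :=
  ∃ (I : Type) (_ : Nonempty I) (_ : SemilatticeSup I)
    (Φ : I → ((lp (fun _ : G => H) 2 →L[ℂ] lp (fun _ : G => H) 2) →ₗ[ℂ]
              (lp (fun _ : G => H) 2 →L[ℂ] lp (fun _ : G => H) 2))),
    (∀ i, Φ i 1 = 1) ∧
    (∀ i, CPOnCrossed ι α (Φ i)) ∧
    (∀ i, ∀ x ∈ CrossedSet ι α, τ (E (Φ i (star x * x))) ≤ τ (E (star x * x))) ∧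
    (∀ i, ∀ ε : ℝ, 0 < ε →
      ∃ S : Finset (lp (fun _ : G => H) 2 →L[ℂ] lp (fun _ : G => H) 2),
        ∀ x ∈ CrossedSet ι α, l2normCr τ E x ≤ 1 →
          ∃ b ∈ S, l2normCr τ E (Φ i x - b) < ε) ∧
    (∀ x ∈ CrossedSet ι α,
      Tendsto (fun i => l2normCr τ E (Φ i x - x)) atTop (nhds 0))

end BigProps

section Nuc

open Filter

variable {A : Type*} [NonUnitalCStarAlgebra A]

/-- Nuclearity of the reduced crossed product `A ⋊_{α,r} G`: there is a net of
finite-rank completely positive contractions on it converging to the identity in the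
point-norm topology. -/
def CrossedNuclear (ι : A →⋆ₙₐ[ℂ] (H →L[ℂ] H)) (α : G → A ≃⋆ₐ[ℂ] A) : Prop :=
  ∃ (I : Type) (_ : Nonempty I) (_ : SemilatticeSup I)
    (Φ : I → ((lp (fun _ : G => H) 2 →L[ℂ] lp (fun _ : G => H) 2) →ₗ[ℂ]
              (lp (fun _ : G => H) 2 →L[ℂ] lp (fun _ : G => H) 2))),
    (∀ i, CPOnCrossed ι α (Φ i)) ∧
    (∀ i, ∀ x ∈ CrossedSet ι α, ‖Φ i x‖ ≤ ‖x‖) ∧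
    (∀ i, FiniteDimensional ℂ
      (Submodule.span ℂ ((fun x => Φ i x) '' CrossedSet ι α))) ∧
    (∀ x ∈ CrossedSet ι α, Tendsto (fun i => ‖Φ i x - x‖) atTop (nhds 0))

/-- Nuclearity of the `C*`-dynamical system `(A,G,α)` (Definition 4.2): a net of
completely positive, finitely supported Herz-Schur multipliers, with `‖F_i(e)‖_cb ≤ 1`,
with finite-rank values, converging to the identity pointwise in norm. -/
def DynNuclear (ι : A →⋆ₙₐ[ℂ] (H →L[ℂ] H)) (α : G → A ≃⋆ₐ[ℂ] A) : Prop :=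
  ∃ (I : Type) (_ : Nonempty I) (_ : SemilatticeSup I) (F : I → G → (A →ₗ[ℂ] A)),
    (∀ i, IsHerzSchurMultiplierCP ι α (F i)) ∧
    (∀ i, (Function.support (F i)).Finite) ∧
    (∀ i, CBBound (fun a => ι a) (fun a => ι a) (F i 1) 1) ∧
    (∀ i (s : G), FiniteDimensional ℂ (LinearMap.range (F i s))) ∧
    (∀ (s : G) (a : A), Tendsto (fun i => ‖F i s a - a‖) atTop (nhds 0))

end Nuc

section Amen

open Filter

variable {A : Type*} [CStarAlgebra A]

/-- Amenability of the action `α` of a discrete group `G` on a unital C*-algebra `A`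
(Definition 4.5): a net of finitely supported functions `T_i : G → Z(A)⁺` with
`Σ_s T_i(s)² = 1` and `‖Σ_s (T_i(s) - α_t(T_i(t⁻¹s)))*(T_i(s) - α_t(T_i(t⁻¹s)))‖ → 0`. -/
def AmenableAction {G : Type*} [Group G] (α : G → A ≃⋆ₐ[ℂ] A) : Prop :=
  ∃ (I : Type) (_ : Nonempty I) (_ : SemilatticeSup I) (T : I → G → A),
    (∀ i, (Function.support (T i)).Finite) ∧
    (∀ i (s : G) (c : A), Commute (T i s) c) ∧
    (∀ i (s : G), ∃ b : A, T i s = star b * b) ∧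
    (∀ i, ∑ᶠ s : G, T i s * T i s = 1) ∧
    (∀ t : G, Tendsto (fun i =>
        ‖∑ᶠ s : G, star (T i s - α t (T i (t⁻¹ * s))) *
          (T i s - α t (T i (t⁻¹ * s)))‖) atTop (nhds 0))

end Amen

universe u v w

/-- Data for a Stinespring-type representation of an operator-valued function on
`X × X`: a Hilbert space `K`, a *-representation `ρ : A → B(K)` and
families of operators `V, W : X → B(H,K)`. -/
structure OpValuedRep (A : Type u) [NonUnitalCStarAlgebra A]
    (H : Type v) [NormedAddCommGroup H] [InnerProductSpace ℂ H] [CompleteSpace H]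
    (X : Type w) where
  /-- the Hilbert space of the representation -/
  K : Type (max u v w)
  [nacg : NormedAddCommGroup K]
  [ips : InnerProductSpace ℂ K]
  [cpl : CompleteSpace K]
  /-- the representation -/
  ρ : A →⋆ₙₐ[ℂ] (K →L[ℂ] K)
  /-- the left family of operators -/
  V : X → (H →L[ℂ] K)
  /-- the right family of operators -/
  W : X → (H →L[ℂ] K)

attribute [instance] OpValuedRep.nacg OpValuedRep.ips OpValuedRep.cpl

end
noncomputable section
open scoped ComplexOrder ENNReal
open Matrix

/-!
A function `φ` of positive type defines a positive sesquilinear form on the finitely supported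
functions `X × H → A`, by `⟨a at (x, ξ), b at (y, η)⟩ = ⟨ξ, φ(x, y)(a* b) η⟩`. Left multiplication
by `A` on the resulting Hilbert space is a representation `ρ`. An approximate unit, together with
the bound on `φ(x, x)`, produces operators `V(x)` with `φ(x, y)(a) = V(x)* ρ(a) V(y)` and
`‖V(x)‖² ≤ ‖φ(x, x)‖_cb`.

Positivity of the real part of a matrix over `A` does not depend on the faithful representation in
which it is tested. Truncating kernels to finite subsets of `X`, cutting down by an approximate unit
and taking limits, the map which replaces `ι` by `ρ` in `T_k + z` is therefore unital and completely
positive, and Arveson's extension theorem extends it to all bounded operators on `ℓ²(X, H)`.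
Compressing by the diagonal operator with entries `V(x)` gives a completely positive extension of
`S_φ` whose completely bounded norm is at most `sup_x ‖φ(x, x)‖_cb`. Evaluating `S_φ` on elementary
matrices gives the converse implications and the reverse norm inequality.
-/

open scoped InnerProductSpace

section StarHom

variable {A B : Type*} [NonUnitalCStarAlgebra A]
  [NonUnitalCStarAlgebra B] [PartialOrder B] [StarOrderedRing B]

-- `Φ` maps the negative part of `a` to the negative part of `Φ a`, which vanishes.
lemma exists_eq_star_mul_self_of_map_nonneg {Φ : A →⋆ₙₐ[ℂ] B} (hΦ : Function.Injective Φ)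
    {a : A} (ha : 0 ≤ Φ a) : ∃ b, a = star b * b := by
  let : PartialOrder A := CStarAlgebra.spectralOrder A
  have : StarOrderedRing A := CStarAlgebra.spectralOrderedRing A
  have ha_sa : IsSelfAdjoint a := hΦ <| by rw [map_star, ha.isSelfAdjoint.star_eq]
  have hcont : Continuous Φ := (NonUnitalStarAlgHom.isometry Φ hΦ).continuous
  have hneg : Φ a⁻ = (Φ a)⁻ := by
    rw [CFC.negPart_def, CFC.negPart_def]
    exact NonUnitalStarAlgHom.map_cfcₙ Φ _ a (hφ := hcont)
  rw [← CStarAlgebra.nonneg_iff_eq_star_mul_self, ← CFC.negPart_eq_zero_iff a,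
    ← map_eq_zero_iff Φ hΦ, hneg, CFC.negPart_eq_zero_iff (Φ a) ha.isSelfAdjoint]
  exact ha

end StarHom

section PiDiag

variable {ν : Type*} {H K : Type*} [NormedAddCommGroup H] [InnerProductSpace ℂ H]
  [NormedAddCommGroup K] [InnerProductSpace ℂ K]

/-- The operator `H ⊕ ⋯ ⊕ H → K ⊕ ⋯ ⊕ K` with diagonal entries `W i`. -/
def piDiag (W : ν → H →L[ℂ] K) : (PiLp 2 fun _ : ν => H) →L[ℂ] PiLp 2 fun _ : ν => K :=
  ((PiLp.continuousLinearEquiv 2 ℂ fun _ : ν => K).symm : (ν → K) →L[ℂ] PiLp 2 fun _ : ν => K) ∘L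
    ContinuousLinearMap.pi fun i => W i ∘L PiLp.proj 2 (fun _ : ν => H) i

lemma piDiag_apply (W : ν → H →L[ℂ] K) (w : PiLp 2 fun _ : ν => H) (i : ν) :
    piDiag W w i = W i (w i) := rfl

variable [Fintype ν]

lemma norm_piDiag_le {W : ν → H →L[ℂ] K} {c : ℝ} (hc : 0 ≤ c) (hW : ∀ i, ‖W i‖ ≤ c) :
    ‖piDiag W‖ ≤ c := by
  refine ContinuousLinearMap.opNorm_le_bound _ hc fun w => ?_
  rw [← sq_le_sq₀ (norm_nonneg _) (by positivity), mul_pow, PiLp.norm_sq_eq_of_L2,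
    PiLp.norm_sq_eq_of_L2, Finset.mul_sum]
  gcongr with i
  rw [← mul_pow, piDiag_apply]
  gcongr
  exact (W i).le_of_opNorm_le (hW i) _

end PiDiag

section MatOp

variable {ν : Type*} [Fintype ν]
variable {H : Type*} [NormedAddCommGroup H] [InnerProductSpace ℂ H]

lemma matOp_apply (M : Matrix ν ν (H →L[ℂ] H)) (w : PiLp 2 fun _ : ν => H) (i : ν) :
    matOp M w i = ∑ j, M i j (w j) := by
  simp [matOp]

lemma inner_matOp (M : Matrix ν ν (H →L[ℂ] H)) (v w : PiLp 2 fun _ : ν => H) :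
    ⟪v, matOp M w⟫_ℂ = ∑ i, ∑ j, ⟪v i, M i j (w j)⟫_ℂ := by
  simp_rw [PiLp.inner_apply, matOp_apply, inner_sum]

lemma matOp_injective : Function.Injective (matOp (ν := ν) (H := H)) := by
  classical
  intro M N h
  ext i j ξ
  have := congrArg (fun T => T (WithLp.toLp 2 (Pi.single j ξ)) i) h
  simpa [matOp_apply, Pi.single_apply, apply_ite] using this

lemma nonneg_iff_forall_inner_nonneg {T : H →L[ℂ] H} : 0 ≤ T ↔ ∀ ξ, 0 ≤ ⟪ξ, T ξ⟫_ℂ := by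
  rw [ContinuousLinearMap.nonneg_iff_isPositive]
  refine ⟨fun hT => hT.inner_nonneg_right, fun h => ?_⟩
  refine T.isPositive_iff_complex.mpr fun ξ => ?_
  rw [← inner_conj_symm, ← Complex.star_def, (IsSelfAdjoint.of_nonneg (h ξ)).star_eq]
  exact ⟨Complex.ext rfl (Complex.nonneg_iff.mp (h ξ)).2, (Complex.nonneg_iff.mp (h ξ)).1⟩

lemma nonneg_matOp_iff {M : Matrix ν ν (H →L[ℂ] H)} :
    0 ≤ matOp M ↔ ∀ w : ν → H, 0 ≤ ∑ i, ∑ j, ⟪w i, M i j (w j)⟫_ℂ := by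
  simp_rw [nonneg_iff_forall_inner_nonneg, inner_matOp]
  exact ⟨fun h w => h (WithLp.toLp 2 w), fun h w => h w⟩

variable [CompleteSpace H]

lemma star_matOp (M : Matrix ν ν (H →L[ℂ] H)) : star (matOp M) = matOp Mᴴ := by
  refine ((ContinuousLinearMap.eq_adjoint_iff _ _).mpr fun v w => ?_).symm
  rw [inner_matOp, ← inner_conj_symm, inner_matOp, Finset.sum_comm]
  simp [ContinuousLinearMap.star_eq_adjoint, ContinuousLinearMap.adjoint_inner_right]

variable {A : Type*} [NonUnitalCStarAlgebra A]

variable (ν) in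
/-- The amplification `M_ν(A) → B(H ⊕ ⋯ ⊕ H)` of a `*`-representation of `A` on `H`. -/
def matAmp (σ : A →⋆ₙₐ[ℂ] (H →L[ℂ] H)) :
    CStarMatrix ν ν A →⋆ₙₐ[ℂ]
      ((PiLp 2 fun _ : ν => H) →L[ℂ] PiLp 2 fun _ : ν => H) where
  toFun M := matOp (Matrix.of fun i j => σ (M i j))
  map_smul' c M := by ext w i; simp [matOp_apply, Finset.smul_sum]
  map_zero' := by ext w i; simp [matOp_apply]
  map_add' M N := by ext w i; simp [matOp_apply, Finset.sum_add_distrib]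
  map_mul' M N := by
    ext w i
    simp only [matOp_apply, Matrix.of_apply, CStarMatrix.mul_apply, map_sum, map_mul,
      _root_.sum_apply, mul_apply_eq_comp]
    exact Finset.sum_comm
  map_star' M := by
    rw [star_matOp]
    congr 1
    ext i j : 2
    simp [CStarMatrix.star_apply, map_star]

lemma matAmp_injective {σ : A →⋆ₙₐ[ℂ] (H →L[ℂ] H)} (hσ : Function.Injective σ) :
    Function.Injective (matAmp ν σ) :=
  fun _ _ h => Matrix.map_injective hσ (matOp_injective h)

lemma MatPos.nonneg_matOp_map {M : Matrix ν ν A} (hM : MatPos M)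
    (σ : A →⋆ₙₐ[ℂ] (H →L[ℂ] H)) : 0 ≤ matOp (M.map σ) := by
  obtain ⟨N, rfl⟩ := hM
  let N' : CStarMatrix ν ν A := CStarMatrix.ofMatrix N
  have h : matAmp ν σ (star N' * N') = star (matAmp ν σ N') * matAmp ν σ N' := by
    rw [map_mul, map_star]
  exact (star_mul_self_nonneg (matAmp ν σ N')).trans_eq h.symm

lemma matPos_iff_nonneg_matOp_map {σ : A →⋆ₙₐ[ℂ] (H →L[ℂ] H)} (hσ : Function.Injective σ)
    {M : Matrix ν ν A} : MatPos M ↔ 0 ≤ matOp (M.map σ) := by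
  let : PartialOrder A := CStarAlgebra.spectralOrder A
  have : StarOrderedRing A := CStarAlgebra.spectralOrderedRing A
  refine ⟨fun h => h.nonneg_matOp_map σ, fun h => ?_⟩
  obtain ⟨N, hN⟩ := exists_eq_star_mul_self_of_map_nonneg (matAmp_injective hσ)
    (a := CStarMatrix.ofMatrix M) h
  exact ⟨CStarMatrix.ofMatrix.symm N, hN⟩

lemma matPos_iff_nonneg_matOp {M : Matrix ν ν (H →L[ℂ] H)} : MatPos M ↔ 0 ≤ matOp M := by
  have h := matPos_iff_nonneg_matOp_map (σ := NonUnitalStarAlgHom.id ℂ (H →L[ℂ] H)) (M := M)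
    Function.injective_id
  rwa [NonUnitalStarAlgHom.coe_id, Matrix.map_id] at h

variable {K : Type*} [NormedAddCommGroup K] [InnerProductSpace ℂ K] [CompleteSpace K]
  {ι : A →⋆ₙₐ[ℂ] (H →L[ℂ] H)}

lemma norm_matOp_map_le (hι : Function.Injective ι) (ρ : A →⋆ₙₐ[ℂ] (K →L[ℂ] K))
    (M : Matrix ν ν A) : ‖matOp (M.map ρ)‖ ≤ ‖matOp (M.map ι)‖ := by
  let : PartialOrder A := CStarAlgebra.spectralOrder A
  have : StarOrderedRing A := CStarAlgebra.spectralOrderedRing A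
  have hρM := NonUnitalStarAlgHom.norm_apply_le (matAmp ν ρ) (CStarMatrix.ofMatrix M)
  have hιM := NonUnitalStarAlgHom.norm_map (matAmp ν ι) (matAmp_injective hι)
    (CStarMatrix.ofMatrix M)
  exact hρM.trans_eq hιM.symm

lemma sum_inner_map_add_conjTranspose (σ : A →⋆ₙₐ[ℂ] (H →L[ℂ] H)) (M : Matrix ν ν A)
    (w : ν → H) : ∑ i, ∑ j, ⟪w i, σ ((M + Mᴴ) i j) (w j)⟫_ℂ =
      ((2 * (∑ i, ∑ j, ⟪w i, σ (M i j) (w j)⟫_ℂ).re : ℝ) : ℂ) := by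
  have hstar : ∑ i, ∑ j, ⟪w i, σ (Mᴴ i j) (w j)⟫_ℂ =
      (starRingEnd ℂ) (∑ i, ∑ j, ⟪w i, σ (M i j) (w j)⟫_ℂ) := by
    rw [Finset.sum_comm]
    simp [map_star, ContinuousLinearMap.star_eq_adjoint, ContinuousLinearMap.adjoint_inner_right]
  simp only [Matrix.add_apply, map_add, _root_.add_apply, inner_add_right,
    Finset.sum_add_distrib]
  rw [hstar, Complex.add_conj]

-- `M + Mᴴ` carries the real part of the form of `M`, and its positivity does not depend on
-- the faithful representation in which it is tested.
lemma re_sum_inner_map_nonneg (hι : Function.Injective ι) (ρ : A →⋆ₙₐ[ℂ] (K →L[ℂ] K))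
    {M : Matrix ν ν A} (hM : ∀ w : ν → H, 0 ≤ (∑ i, ∑ j, ⟪w i, ι (M i j) (w j)⟫_ℂ).re)
    (u : ν → K) : 0 ≤ (∑ i, ∑ j, ⟪u i, ρ (M i j) (u j)⟫_ℂ).re := by
  have hpos : MatPos (M + Mᴴ) := by
    refine (matPos_iff_nonneg_matOp_map hι).mpr (nonneg_matOp_iff.mpr fun w => ?_)
    simp only [Matrix.map_apply, sum_inner_map_add_conjTranspose]
    exact_mod_cast mul_nonneg zero_le_two (hM w)
  have hu := nonneg_matOp_iff.mp (hpos.nonneg_matOp_map ρ) u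
  simp only [Matrix.map_apply, sum_inner_map_add_conjTranspose] at hu
  exact nonneg_of_mul_nonneg_right (by exact_mod_cast hu) zero_lt_two

lemma matOp_compress (W : ν → H →L[ℂ] K) (P : Matrix ν ν (K →L[ℂ] K)) :
    matOp (Matrix.of fun i j => ContinuousLinearMap.adjoint (W i) ∘L P i j ∘L W j) =
      ContinuousLinearMap.adjoint (piDiag W) ∘L matOp P ∘L piDiag W := by
  refine ContinuousLinearMap.ext fun w => ext_inner_left ℂ fun v => ?_
  simp [inner_matOp, ContinuousLinearMap.adjoint_inner_right, piDiag_apply]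

lemma MatPos.compress {P : Matrix ν ν (K →L[ℂ] K)} (hP : MatPos P) (W : ν → H →L[ℂ] K) :
    MatPos (Matrix.of fun i j => ContinuousLinearMap.adjoint (W i) ∘L P i j ∘L W j) := by
  rw [matPos_iff_nonneg_matOp, ContinuousLinearMap.nonneg_iff_isPositive] at hP ⊢
  exact matOp_compress W P ▸ hP.adjoint_conj (piDiag W)

lemma norm_matOp_compress_le {W : ν → H →L[ℂ] K} {c : ℝ} (hc : 0 ≤ c) (hW : ∀ i, ‖W i‖ ≤ c)
    (P : Matrix ν ν (K →L[ℂ] K)) :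
    ‖matOp (Matrix.of fun i j => ContinuousLinearMap.adjoint (W i) ∘L P i j ∘L W j)‖ ≤
      c ^ 2 * ‖matOp P‖ := by
  have hD := norm_piDiag_le hc hW
  calc _ = ‖ContinuousLinearMap.adjoint (piDiag W) ∘L matOp P ∘L piDiag W‖ := by
        rw [matOp_compress]
    _ ≤ ‖piDiag W‖ * (‖matOp P‖ * ‖piDiag W‖) := by
        grw [ContinuousLinearMap.opNorm_comp_le, ContinuousLinearMap.opNorm_comp_le,
          LinearIsometryEquiv.norm_map]
    _ ≤ c * (‖matOp P‖ * c) := by gcongr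
    _ = c ^ 2 * ‖matOp P‖ := by ring

end MatOp

section GNS

open UniformSpace Completion

-- In the unitization `‖c‖² - c⋆c = d⋆d`, and multiplication by `d` preserves the ideal `A`.
lemma exists_star_mul_eq_norm_sq_smul_sub {A : Type*} [NonUnitalCStarAlgebra A] (c : A) :
    ∃ D : A →ₗ[ℂ] A, ∀ a b, star (D a) * D b =
      ((‖c‖ ^ 2 : ℝ) : ℂ) • (star a * b) - star (c * a) * (c * b) := by
  let : PartialOrder (Unitization ℂ A) := CStarAlgebra.spectralOrder _
  have : StarOrderedRing (Unitization ℂ A) := CStarAlgebra.spectralOrderedRing _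
  have hle : star (c : Unitization ℂ A) * c ≤ algebraMap ℝ _ (‖c‖ ^ 2) := by
    have := (IsSelfAdjoint.star_mul_self (c : Unitization ℂ A)).le_algebraMap_norm_self
    rwa [CStarRing.norm_star_mul_self, Unitization.norm_inr, ← sq] at this
  obtain ⟨d, hd⟩ := CStarAlgebra.nonneg_iff_eq_star_mul_self.mp (sub_nonneg.mpr hle)
  let D : A →ₗ[ℂ] A :=
    Unitization.sndHom ℂ ℂ A ∘ₗ LinearMap.mulLeft ℂ d ∘ₗ Unitization.inrHom ℂ ℂ A
  have hD (a : A) : (D a : Unitization ℂ A) = d * a := by ext <;> simp [D]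
  refine ⟨D, fun a b => Unitization.inr_injective (R := ℂ) ?_⟩
  calc ((star (D a) * D b : A) : Unitization ℂ A)
    _ = star (a : Unitization ℂ A) * (star d * d) * b := by simp [hD, mul_assoc]
    _ = _ := by
      rw [← hd, mul_sub, sub_mul, Algebra.algebraMap_eq_smul_one]
      simp [mul_assoc, ← Complex.coe_smul]

/-- A positive kernel on `I` with values in the linear functionals on the C⋆-algebra `A`: the data
from which the Gelfand–Naimark–Segal construction builds a Hilbert space. For a one-point set `I`
this is a positive functional on `A`. -/
structure PositiveKernel (I A : Type*) [NonUnitalCStarAlgebra A] where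
  toFun : I → I → A →ₗ[ℂ] ℂ
  nonneg : ∀ f : I →₀ A, 0 ≤ f.sum fun i a => f.sum fun j b => toFun i j (star a * b)

namespace PositiveKernel

variable {I A : Type*} [NonUnitalCStarAlgebra A]

instance : CoeFun (PositiveKernel I A) fun _ => I → I → A →ₗ[ℂ] ℂ := ⟨toFun⟩

variable (κ : PositiveKernel I A)

/-- The positive semidefinite sesquilinear form `⟨a ⊗ i, b ⊗ j⟩ = κ i j (a⋆b)` of the kernel. -/
def form : (I →₀ A) →ₗ⋆[ℂ] (I →₀ A) →ₗ[ℂ] ℂ :=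
  LinearMap.mk₂'ₛₗ (starRingEnd ℂ) (RingHom.id ℂ)
    (fun f g => f.sum fun i a => g.sum fun j b => κ i j (star a * b))
    (fun f₁ f₂ g => Finsupp.sum_add_index' (by simp) fun i a b => by
      simp [add_mul, Finsupp.sum_add])
    (fun c f g => by
      rw [Finsupp.sum_smul_index' (by simp), smul_eq_mul, Finsupp.mul_sum]
      simp [Finsupp.mul_sum, smul_mul_assoc])
    (fun f g₁ g₂ => by
      rw [← Finsupp.sum_add]
      refine Finsupp.sum_congr fun i _ => Finsupp.sum_add_index' (by simp) fun j a b => ?_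
      rw [mul_add, map_add])
    (fun c f g => by
      rw [smul_eq_mul, Finsupp.mul_sum]
      refine Finsupp.sum_congr fun i _ => ?_
      rw [Finsupp.sum_smul_index' (by simp), RingHom.id_apply, Finsupp.mul_sum]
      simp [mul_smul_comm])

lemma form_apply (f g : I →₀ A) :
    κ.form f g = f.sum fun i a => g.sum fun j b => κ i j (star a * b) := rfl

lemma form_self_nonneg (f : I →₀ A) : 0 ≤ κ.form f f := κ.nonneg f

lemma conj_form (f g : I →₀ A) : (starRingEnd ℂ) (κ.form g f) = κ.form f g := by
  have him (h : I →₀ A) : (κ.form h h).im = 0 :=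
    (Complex.nonneg_iff.mp (κ.form_self_nonneg h)).2.symm
  have hadd : (κ.form f g).im + (κ.form g f).im = 0 := by simpa [him] using him (f + g)
  have haddI : (κ.form f g).re + -(κ.form g f).re = 0 := by
    simpa [him] using him (f + Complex.I • g)
  apply Complex.ext <;> simp <;> linarith

lemma form_mapRange (D E : A →ₗ[ℂ] A) (f g : I →₀ A) :
    κ.form (Finsupp.mapRange.linearMap D f) (Finsupp.mapRange.linearMap E g) =
      f.sum fun i a => g.sum fun j b => κ i j (star (D a) * E b) := by
  simp only [form_apply, Finsupp.mapRange.linearMap_apply]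
  rw [Finsupp.sum_mapRange_index (by simp)]
  exact Finsupp.sum_congr fun i _ => Finsupp.sum_mapRange_index (by simp)

/-- The space `I →₀ A`, equipped with the semi-inner product given by a positive kernel. -/
def PreGNS (_ : PositiveKernel I A) : Type _ := I →₀ A

instance : AddCommGroup κ.PreGNS := inferInstanceAs (AddCommGroup (I →₀ A))
instance : Module ℂ κ.PreGNS := inferInstanceAs (Module ℂ (I →₀ A))

/-- The identity map onto the type synonym `PreGNS`. -/
def toPreGNS : (I →₀ A) ≃ₗ[ℂ] κ.PreGNS := LinearEquiv.refl ℂ _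

/-- The semi-inner product of the GNS construction. -/
abbrev preGNSCore : PreInnerProductSpace.Core ℂ κ.PreGNS where
  inner f g := κ.form (κ.toPreGNS.symm f) (κ.toPreGNS.symm g)
  conj_inner_symm _ _ := κ.conj_form _ _
  re_inner_nonneg _ := (Complex.nonneg_iff.mp (κ.form_self_nonneg _)).1
  add_left f g h := by rw [map_add, map_add, LinearMap.add_apply]
  smul_left f g c := by rw [map_smul, LinearMap.map_smulₛₗ, LinearMap.smul_apply, smul_eq_mul]

instance : SeminormedAddCommGroup κ.PreGNS :=
  InnerProductSpace.Core.toSeminormedAddCommGroup (c := κ.preGNSCore)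
instance : InnerProductSpace ℂ κ.PreGNS := InnerProductSpace.ofCore κ.preGNSCore

lemma inner_toPreGNS (f g : I →₀ A) : ⟪κ.toPreGNS f, κ.toPreGNS g⟫_ℂ = κ.form f g := rfl

lemma norm_toPreGNS_sq (f : I →₀ A) : ‖κ.toPreGNS f‖ ^ 2 = (κ.form f f).re := by
  rw [← inner_self_eq_norm_sq (𝕜 := ℂ), inner_toPreGNS]
  rfl

lemma norm_toPreGNS_mulLeft_le (c : A) (f : I →₀ A) :
    ‖κ.toPreGNS (Finsupp.mapRange.linearMap (LinearMap.mulLeft ℂ c) f)‖ ≤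
      ‖c‖ * ‖κ.toPreGNS f‖ := by
  obtain ⟨D, hD⟩ := exists_star_mul_eq_norm_sq_smul_sub c
  have hdefect : κ.form (Finsupp.mapRange.linearMap D f) (Finsupp.mapRange.linearMap D f) =
      ((‖c‖ ^ 2 : ℝ) : ℂ) * κ.form f f -
        κ.form (Finsupp.mapRange.linearMap (LinearMap.mulLeft ℂ c) f)
          (Finsupp.mapRange.linearMap (LinearMap.mulLeft ℂ c) f) := by
    rw [form_mapRange, form_mapRange, form_apply]
    simp only [hD, LinearMap.mulLeft_apply, map_sub, map_smul, Finsupp.sum_sub, smul_eq_mul,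
      Finsupp.mul_sum]
  have hnonneg := κ.form_self_nonneg (Finsupp.mapRange.linearMap D f)
  rw [hdefect] at hnonneg
  rw [← sq_le_sq₀ (by positivity) (by positivity), mul_pow, norm_toPreGNS_sq, norm_toPreGNS_sq,
    ← sub_nonneg, ← Complex.re_ofReal_mul, ← Complex.sub_re]
  exact (Complex.nonneg_iff.mp hnonneg).1

/-- The bounded operator of left multiplication by `c` on `PreGNS`. -/
def leftMul (c : A) : κ.PreGNS →L[ℂ] κ.PreGNS :=
  (κ.toPreGNS.toLinearMap ∘ₗ Finsupp.mapRange.linearMap (LinearMap.mulLeft ℂ c) ∘ₗ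
    κ.toPreGNS.symm.toLinearMap).mkContinuous ‖c‖ fun _ => κ.norm_toPreGNS_mulLeft_le c _

lemma leftMul_toPreGNS (c : A) (f : I →₀ A) : κ.leftMul c (κ.toPreGNS f) =
    κ.toPreGNS (Finsupp.mapRange.linearMap (LinearMap.mulLeft ℂ c) f) := rfl

lemma inner_leftMul_star (c : A) (f g : κ.PreGNS) :
    ⟪κ.leftMul (star c) f, g⟫_ℂ = ⟪f, κ.leftMul c g⟫_ℂ := by
  obtain ⟨f, rfl⟩ := κ.toPreGNS.surjective f
  obtain ⟨g, rfl⟩ := κ.toPreGNS.surjective g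
  have h₁ := κ.form_mapRange (LinearMap.mulLeft ℂ (star c)) LinearMap.id f g
  have h₂ := κ.form_mapRange LinearMap.id (LinearMap.mulLeft ℂ c) f g
  rw [Finsupp.mapRange.linearMap_id, LinearMap.id_apply] at h₁ h₂
  rw [leftMul_toPreGNS, leftMul_toPreGNS, inner_toPreGNS, inner_toPreGNS, h₁, h₂]
  simp [mul_assoc]

lemma leftMul_add (a b : A) : κ.leftMul (a + b) = κ.leftMul a + κ.leftMul b :=
  ContinuousLinearMap.ext fun _ => Finsupp.ext fun _ => add_mul a b _

lemma leftMul_smul (c : ℂ) (a : A) : κ.leftMul (c • a) = c • κ.leftMul a :=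
  ContinuousLinearMap.ext fun _ => Finsupp.ext fun _ => smul_mul_assoc c a _

lemma leftMul_zero : κ.leftMul 0 = 0 :=
  ContinuousLinearMap.ext fun _ => Finsupp.ext fun _ => zero_mul _

lemma leftMul_mul (a b : A) : κ.leftMul (a * b) = κ.leftMul a ∘L κ.leftMul b :=
  ContinuousLinearMap.ext fun _ => Finsupp.ext fun _ => mul_assoc a b _

/-- The Hilbert space of the GNS construction. -/
abbrev GNS := Completion κ.PreGNS

lemma gns_clm_ext {S T : κ.GNS →L[ℂ] κ.GNS} (h : ∀ f : κ.PreGNS, S f = T f) : S = T :=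
  ContinuousLinearMap.coeFn_injective <|
    denseRange_coe.equalizer S.continuous T.continuous (funext h)

/-- The GNS representation of `A`, by left multiplication. -/
def gnsRep : A →⋆ₙₐ[ℂ] (κ.GNS →L[ℂ] κ.GNS) where
  toFun c := (κ.leftMul c).completion
  map_smul' c a := κ.gns_clm_ext fun f => by simp [leftMul_smul]
  map_zero' := κ.gns_clm_ext fun f => by simp [leftMul_zero, Completion.coe_zero]
  map_add' a b := κ.gns_clm_ext fun f => by simp [leftMul_add, Completion.coe_add]
  map_mul' a b := κ.gns_clm_ext fun f => by simp [leftMul_mul]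
  map_star' a := by
    refine (ContinuousLinearMap.eq_adjoint_iff _ _).mpr fun f g => ?_
    induction f, g using Completion.induction_on₂ with
    | hp => apply isClosed_eq <;> fun_prop
    | ih f g => simp [inner_leftMul_star]

/-- The class of `a ⊗ i` in the GNS space. -/
def gnsVec (i : I) (a : A) : κ.GNS := κ.toPreGNS (Finsupp.single i a)

lemma inner_gnsVec (i j : I) (a b : A) :
    ⟪κ.gnsVec i a, κ.gnsVec j b⟫_ℂ = κ i j (star a * b) := by
  simp [gnsVec, inner_toPreGNS, form_apply]

lemma gnsRep_gnsVec (c : A) (i : I) (a : A) :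
    κ.gnsRep c (κ.gnsVec i a) = κ.gnsVec i (c * a) := by
  change (κ.leftMul c).completion _ = _
  rw [gnsVec, ContinuousLinearMap.completion_apply_coe, leftMul_toPreGNS]
  simp [gnsVec]

lemma dense_span_range_gnsVec :
    Dense (Submodule.span ℂ (Set.range fun p : I × A => κ.gnsVec p.1 p.2) : Set κ.GNS) := by
  refine denseRange_coe.mono ?_
  rintro _ ⟨f, rfl⟩
  obtain ⟨f, rfl⟩ := κ.toPreGNS.surjective f
  induction f using Finsupp.induction_linear with
  | zero => rw [map_zero, Completion.coe_zero]; exact Submodule.zero_mem _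
  | add f g hf hg => rw [map_add, Completion.coe_add]; exact Submodule.add_mem _ hf hg
  | single i a => exact Submodule.subset_span ⟨(i, a), rfl⟩

end PositiveKernel

end GNS

section Stinespring

open Filter Topology UniformSpace

lemma exists_contractive_approximateUnit (A : Type*) [NonUnitalCStarAlgebra A] :
    ∃ l : Filter A, l.NeBot ∧ (∀ᶠ e in l, ‖e‖ ≤ 1) ∧
      (∀ a, Tendsto (fun e => e * a) l (𝓝 a)) ∧ ∀ a, Tendsto (fun e => star e * a) l (𝓝 a) := by
  let : PartialOrder A := CStarAlgebra.spectralOrder A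
  have : StarOrderedRing A := CStarAlgebra.spectralOrderedRing A
  have hl := CStarAlgebra.increasingApproximateUnit A
  refine ⟨CStarAlgebra.approximateUnit A, hl.neBot, hl.eventually_norm,
    hl.tendsto_mul_right, fun a => (hl.tendsto_mul_right a).congr' ?_⟩
  filter_upwards [hl.eventually_star_eq] with e he
  rw [he]

lemma matPos_star_mul {R ν : Type*} [NonUnitalSemiring R] [StarRing R] [Fintype ν] (a : ν → R) :
    MatPos (Matrix.of fun i j => star (a i) * a j) := by
  classical
  cases isEmpty_or_nonempty ν with
  | inl h => exact ⟨0, Subsingleton.elim _ _⟩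
  | inr h =>
    obtain ⟨i₀⟩ := h
    refine ⟨Matrix.updateRow 0 i₀ a, ?_⟩
    ext i j
    simp [Matrix.mul_apply, Matrix.updateRow_apply, apply_ite star, ite_mul]

universe u v w

variable {X : Type w} {H : Type v} [NormedAddCommGroup H] [InnerProductSpace ℂ H]
  {A : Type u} [NonUnitalCStarAlgebra A] {φ : X → X → A →ₗ[ℂ] H →L[ℂ] H}

variable (φ) in
/-- The functional `a ↦ ⟨ξ, φ(x, y)(a) η⟩`, for `p = (x, ξ)` and `q = (y, η)`. -/
def coefficient (p q : X × H) : A →ₗ[ℂ] ℂ :=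
  (innerSL ℂ p.2).toLinearMap ∘ₗ (ContinuousLinearMap.apply ℂ H q.2).toLinearMap ∘ₗ φ p.1 q.1

/-- The linear map `∑ a ⊗ (y, η) ↦ ∑ φ(x, y)(a) η`, which extends to the adjoint of the `x`-th
Stinespring operator. -/
def coVec (φ : X → X → A →ₗ[ℂ] H →L[ℂ] H) (x : X) : (X × H →₀ A) →ₗ[ℂ] H :=
  Finsupp.lsum ℂ fun q => (ContinuousLinearMap.apply ℂ H q.2).toLinearMap ∘ₗ φ x q.1

lemma coVec_single (x : X) (q : X × H) (a : A) :
    coVec φ x (Finsupp.single q a) = φ x q.1 a q.2 := by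
  simp [coVec]

namespace PositiveType

variable [CompleteSpace H]

lemma sum_coefficient_nonneg (hφ : PositiveType φ) (f : X × H →₀ A) :
    0 ≤ f.sum fun p a => f.sum fun q b => coefficient φ p q (star a * b) := by
  let e : Fin f.support.card ≃ f.support := f.support.equivFin.symm
  have hpos := hφ _ (fun i => (e i).1.1) _ (matPos_star_mul fun i => f (e i))
  rw [matPos_iff_nonneg_matOp, nonneg_matOp_iff] at hpos
  refine (hpos fun i => (e i).1.2).trans_eq ?_
  simp only [Finsupp.sum, ← Finset.sum_coe_sort f.support, ← e.sum_comp]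
  rfl

/-- The positive kernel whose GNS construction is the Stinespring dilation of `φ`. -/
def kernel (hφ : PositiveType φ) : PositiveKernel (X × H) A where
  toFun := coefficient φ
  nonneg := hφ.sum_coefficient_nonneg

lemma kernel_apply (hφ : PositiveType φ) (p q : X × H) (a : A) :
    hφ.kernel p q a = ⟪p.2, φ p.1 q.1 a q.2⟫_ℂ := rfl

lemma tendsto_inner_gnsVec (hφ : PositiveType φ) (hcont : ∀ x y, Continuous (φ x y))
    {l : Filter A} (hl : ∀ a, Tendsto (fun e => star e * a) l (𝓝 a)) (p : X × H)
    (f : X × H →₀ A) :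
    Tendsto (fun e => ⟪hφ.kernel.gnsVec p e, (hφ.kernel.toPreGNS f : hφ.kernel.GNS)⟫_ℂ) l
      (𝓝 ⟪p.2, coVec φ p.1 f⟫_ℂ) := by
  induction f using Finsupp.induction_linear with
  | zero => simpa [Completion.coe_zero] using tendsto_const_nhds
  | add f g hf hg => simpa [Completion.coe_add, inner_add_right] using hf.add hg
  | single q a =>
    have hq : Continuous fun b => ⟪p.2, φ p.1 q.1 b q.2⟫_ℂ := by
      have := hcont p.1 q.1
      fun_prop
    rw [coVec_single]
    refine ((hq.tendsto a).comp (hl a)).congr fun e => ?_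
    exact (hφ.kernel.inner_gnsVec p q e a).symm

lemma norm_gnsVec_le (hφ : PositiveType φ) {x : X} {c : ℝ} (hc0 : 0 ≤ c)
    (hc : ∀ a, ‖φ x x a‖ ≤ c * ‖a‖) (ξ : H) {e : A} (he : ‖e‖ ≤ 1) :
    ‖hφ.kernel.gnsVec (x, ξ) e‖ ≤ √c * ‖ξ‖ := by
  have hφe : ‖φ x x (star e * e)‖ ≤ c := by
    grw [hc, CStarRing.norm_star_mul_self, he, he, one_mul, mul_one]
  have hsq : ‖hφ.kernel.gnsVec (x, ξ) e‖ ^ 2 ≤ c * ‖ξ‖ ^ 2 := by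
    calc ‖hφ.kernel.gnsVec (x, ξ) e‖ ^ 2
      _ = ‖⟪ξ, φ x x (star e * e) ξ⟫_ℂ‖ := by
        have hinner := hφ.kernel.inner_gnsVec (x, ξ) (x, ξ) e e
        rw [inner_self_eq_norm_sq_to_K] at hinner
        simpa [kernel_apply] using congrArg norm hinner
      _ ≤ ‖ξ‖ * (c * ‖ξ‖) := by
        grw [norm_inner_le_norm, ContinuousLinearMap.le_opNorm, hφe]
      _ = c * ‖ξ‖ ^ 2 := by ring
  rw [← sq_le_sq₀ (by positivity) (by positivity), mul_pow, Real.sq_sqrt hc0]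
  exact hsq

lemma norm_coVec_le (hφ : PositiveType φ) (hcont : ∀ x y, Continuous (φ x y)) {x : X} {c : ℝ}
    (hc0 : 0 ≤ c) (hc : ∀ a, ‖φ x x a‖ ≤ c * ‖a‖) (f : X × H →₀ A) :
    ‖coVec φ x f‖ ≤ √c * ‖hφ.kernel.toPreGNS f‖ := by
  obtain ⟨l, hne, hcontr, -, hstar⟩ := exists_contractive_approximateUnit A
  refine ContinuousLinearMap.opNorm_le_bound (innerSL ℂ (coVec φ x f)) (by positivity)
    (fun ξ => ?_) |>.trans' (innerSL_apply_norm ℂ _).ge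
  rw [innerSL_apply_apply, norm_inner_symm]
  refine le_of_tendsto (hφ.tendsto_inner_gnsVec hcont hstar (x, ξ) f).norm ?_
  filter_upwards [hcontr] with e he
  grw [norm_inner_le_norm, hφ.norm_gnsVec_le hc0 hc ξ he, Completion.norm_coe]
  exact (mul_right_comm _ _ _).le

lemma exists_adjoint_gnsVec (hφ : PositiveType φ) (hcont : ∀ x y, Continuous (φ x y)) {x : X}
    {c : ℝ} (hc0 : 0 ≤ c) (hc : ∀ a, ‖φ x x a‖ ≤ c * ‖a‖) :
    ∃ V : H →L[ℂ] hφ.kernel.GNS, ‖V‖ ≤ √c ∧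
      ∀ q b, ContinuousLinearMap.adjoint V (hφ.kernel.gnsVec q b) = φ x q.1 b q.2 := by
  let S : hφ.kernel.PreGNS →L[ℂ] H :=
    (coVec φ x ∘ₗ hφ.kernel.toPreGNS.symm.toLinearMap).mkContinuous √c
      fun _ => hφ.norm_coVec_le hcont hc0 hc _
  refine ⟨ContinuousLinearMap.adjoint S.fromCompletion, ?_, fun q b => ?_⟩
  · rw [LinearIsometryEquiv.norm_map]
    refine ContinuousLinearMap.opNorm_le_bound _ (Real.sqrt_nonneg c) fun f => ?_
    induction f using Completion.induction_on with
    | hp => apply isClosed_le <;> fun_prop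
    | ih f =>
      rw [ContinuousLinearMap.fromCompletion_apply_coe, Completion.norm_coe]
      exact hφ.norm_coVec_le hcont hc0 hc f
  · rw [ContinuousLinearMap.adjoint_adjoint, PositiveKernel.gnsVec,
      ContinuousLinearMap.fromCompletion_apply_coe]
    exact coVec_single x q b

lemma gnsRep_apply_of_adjoint_gnsVec (hφ : PositiveType φ) {x : X} {V : H →L[ℂ] hφ.kernel.GNS}
    (hV : ∀ q b, ContinuousLinearMap.adjoint V (hφ.kernel.gnsVec q b) = φ x q.1 b q.2)
    (a : A) (ξ : H) : hφ.kernel.gnsRep a (V ξ) = hφ.kernel.gnsVec (x, ξ) a := by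
  refine hφ.kernel.dense_span_range_gnsVec.eq_of_inner_left (𝕜 := ℂ) fun v hv => ?_
  induction hv using Submodule.span_induction with
  | zero => simp
  | add v w _ _ hv hw => rw [inner_add_right, inner_add_right, hv, hw]
  | smul r v _ hv => rw [inner_smul_right, inner_smul_right, hv]
  | mem v hv =>
    obtain ⟨⟨q, b⟩, rfl⟩ := hv
    rw [← ContinuousLinearMap.adjoint_inner_right, ← ContinuousLinearMap.star_eq_adjoint,
      ← map_star, hφ.kernel.gnsRep_gnsVec, ← ContinuousLinearMap.adjoint_inner_right, hV,
      hφ.kernel.inner_gnsVec, kernel_apply]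

theorem exists_stinespring (hφ : PositiveType φ) (hcont : ∀ x y, Continuous (φ x y)) {c : X → ℝ}
    (hc0 : ∀ x, 0 ≤ c x) (hc : ∀ x a, ‖φ x x a‖ ≤ c x * ‖a‖) :
    ∃ R : OpValuedRep.{u, v, w} A H X, NondegenerateRep R.ρ ∧ (∀ x, ‖R.V x‖ ≤ √(c x)) ∧
      R.W = R.V ∧ ∀ x y a, φ x y a = ContinuousLinearMap.adjoint (R.V x) ∘L R.ρ a ∘L R.V y := by
  choose V hVnorm hV using fun x => hφ.exists_adjoint_gnsVec hcont (hc0 x) (hc x)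
  have hρV (x : X) := hφ.gnsRep_apply_of_adjoint_gnsVec (hV x)
  refine ⟨⟨hφ.kernel.GNS, hφ.kernel.gnsRep, V, V⟩, ?_, hVnorm, rfl, fun x y a => ?_⟩
  · refine hφ.kernel.dense_span_range_gnsVec.mono (Submodule.span_mono ?_)
    rintro _ ⟨⟨q, a⟩, rfl⟩
    exact ⟨a, V q.1 q.2, hρV q.1 a q.2⟩
  · ext η
    rw [ContinuousLinearMap.comp_apply, ContinuousLinearMap.comp_apply, hρV, hV]

end PositiveType

end Stinespring

section Compression

lemma CBBound.comp {H K L : Type*} [NormedAddCommGroup H] [InnerProductSpace ℂ H]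
    [NormedAddCommGroup K] [InnerProductSpace ℂ K] [NormedAddCommGroup L] [InnerProductSpace ℂ L]
    {Φ : (K →L[ℂ] K) →ₗ[ℂ] (L →L[ℂ] L)}
    {Ψ : (H →L[ℂ] H) →ₗ[ℂ] (K →L[ℂ] K)} {c : ℝ} (hc : 0 ≤ c)
    (hΦ : CBBound (fun T => T) (fun T => T) Φ c)
    (hΨ : CBBound (fun T => T) (fun T => T) Ψ 1) :
    CBBound (fun T => T) (fun T => T) (Φ ∘ₗ Ψ) c := by
  intro n M
  refine (hΦ n (M.map Ψ)).trans ?_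
  gcongr
  exact (hΨ n M).trans_eq (one_mul _)

variable {H K L : Type*} [NormedAddCommGroup H] [InnerProductSpace ℂ H] [CompleteSpace H]
  [NormedAddCommGroup K] [InnerProductSpace ℂ K] [CompleteSpace K]
  [NormedAddCommGroup L] [InnerProductSpace ℂ L] [CompleteSpace L]

/-- The compression `T ↦ W⋆TW`. -/
def compression (W : H →L[ℂ] K) : (K →L[ℂ] K) →ₗ[ℂ] (H →L[ℂ] H) where
  toFun T := ContinuousLinearMap.adjoint W ∘L T ∘L W
  map_add' S T := by simp
  map_smul' c T := by simp

lemma compression_apply (W : H →L[ℂ] K) (T : K →L[ℂ] K) :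
    compression W T = ContinuousLinearMap.adjoint W ∘L T ∘L W := rfl

lemma isCompletelyPositive_compression (W : H →L[ℂ] K) : IsCompletelyPositive (compression W) :=
  fun _ _ hM => hM.compress fun _ => W

lemma cbBound_compression {W : H →L[ℂ] K} {c : ℝ} (hW : ‖W‖ ≤ c) :
    CBBound (fun T => T) (fun T => T) (compression W) (c ^ 2) :=
  fun _ M => norm_matOp_compress_le ((norm_nonneg W).trans hW) (fun _ => hW) M

lemma isCompletelyPositive_starHom (π : (H →L[ℂ] H) →⋆ₙₐ[ℂ] (K →L[ℂ] K)) :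
    IsCompletelyPositive (π : (H →L[ℂ] H) →ₗ[ℂ] (K →L[ℂ] K)) :=
  fun _ _ hM => matPos_iff_nonneg_matOp.mpr (hM.nonneg_matOp_map π)

lemma cbBound_starHom (π : (H →L[ℂ] H) →⋆ₙₐ[ℂ] (K →L[ℂ] K)) :
    CBBound (fun T => T) (fun T => T) (π : (H →L[ℂ] H) →ₗ[ℂ] (K →L[ℂ] K)) 1 := by
  intro n M
  rw [one_mul]
  exact norm_matOp_map_le (ι := NonUnitalStarAlgHom.id ℂ (H →L[ℂ] H)) Function.injective_id π M

lemma IsCompletelyPositive.comp {Φ : (K →L[ℂ] K) →ₗ[ℂ] (L →L[ℂ] L)}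
    {Ψ : (H →L[ℂ] H) →ₗ[ℂ] (K →L[ℂ] K)} (hΦ : IsCompletelyPositive Φ)
    (hΨ : IsCompletelyPositive Ψ) : IsCompletelyPositive (Φ ∘ₗ Ψ) :=
  fun n M hM => hΦ n (M.map Ψ) (hΨ n M hM)

end Compression

section Extension

-- `G` is determined by its real part, to which the real Riesz extension theorem applies.
theorem exists_complex_riesz_extension {B E : Type*} [AddCommGroup B] [Module ℂ B]
    [AddCommGroup E] [Module ℂ E] {P : PointedCone ℝ E} {j : B →ₗ[ℂ] E} {s : B →ₗ[ℂ] ℂ}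
    (hpos : ∀ b, j b ∈ P → 0 ≤ (s b).re) (hcofinal : ∀ f, ∃ b, j b + f ∈ P) :
    ∃ G : E →ₗ[ℂ] ℂ, (∀ b, G (j b) = s b) ∧ ∀ f ∈ P, 0 ≤ (G f).re := by
  let jR : B →ₗ[ℝ] E := j.restrictScalars ℝ
  let sR : B →ₗ[ℝ] ℝ := Complex.reLm ∘ₗ s.restrictScalars ℝ
  have hker : LinearMap.ker jR ≤ LinearMap.ker sR := fun b (hb : j b = 0) => by
    have h₁ := hpos b (hb ▸ P.zero_mem)
    have h₂ := hpos (-b) (by rw [map_neg, hb, neg_zero]; exact P.zero_mem)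
    rw [map_neg, Complex.neg_re] at h₂
    exact (neg_nonneg.mp h₂).antisymm h₁
  let r : E →ₗ.[ℝ] ℝ :=
    ⟨LinearMap.range jR, (LinearMap.ker jR).liftQ sR hker ∘ₗ jR.quotKerEquivRange.symm⟩
  have hr (b : B) (hb) : r ⟨jR b, hb⟩ = (s b).re := by
    change (LinearMap.ker jR).liftQ sR hker (jR.quotKerEquivRange.symm ⟨jR b, hb⟩) = _
    rw [LinearMap.quotKerEquivRange_symm_apply_image]
    rfl
  obtain ⟨g, hg, hgP⟩ := riesz_extension P r
    (by rintro ⟨_, b, rfl⟩ hb; exact (hpos b hb).trans_eq (hr b _).symm)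
    (fun f => (hcofinal f).imp' (fun b => ⟨jR b, b, rfl⟩) fun _ hb => hb)
  have hgj (b : B) : g (j b) = (s b).re := (hg ⟨jR b, b, rfl⟩).trans (hr b _)
  refine ⟨Module.Dual.extendRCLike g, fun b => ?_, fun f hf => ?_⟩
  · rw [Module.Dual.extendRCLike_apply, ← map_smul, hgj, hgj]
    apply Complex.ext <;> simp
  · exact (hgP f hf).trans_eq (Module.Dual.re_extendRCLike_apply (𝕜 := ℂ) g f).symm

lemma exists_linearIsometry_of_inner_map {E F : Type*} [NormedAddCommGroup E]
    [InnerProductSpace ℂ E] [NormedAddCommGroup F] [InnerProductSpace ℂ F] {J : E → F}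
    (hJ : ∀ u v, ⟪J u, J v⟫_ℂ = ⟪u, v⟫_ℂ) : ∃ J' : E →ₗᵢ[ℂ] F, ∀ u, J' u = J u := by
  have hadd (u v : E) : J (u + v) = J u + J v := by
    rw [← sub_eq_zero, ← inner_self_eq_zero (𝕜 := ℂ)]
    simp only [inner_sub_left, inner_sub_right, inner_add_left, inner_add_right, hJ]
    ring
  have hsmul (c : ℂ) (u : E) : J (c • u) = c • J u := by
    rw [← sub_eq_zero, ← inner_self_eq_zero (𝕜 := ℂ)]
    simp only [inner_sub_left, inner_sub_right, inner_smul_left, inner_smul_right, hJ]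
    ring
  let J' : E →ₗ[ℂ] F := { toFun := J, map_add' := hadd, map_smul' := hsmul }
  exact ⟨J'.isometryOfInner hJ, fun _ => rfl⟩

section MatrixForm

variable {I : Type*} {H : Type*} [NormedAddCommGroup H] [InnerProductSpace ℂ H]

/-- The functional `T ↦ ∑ ⟨w i, T i j (w j)⟩` on finitely supported `I × I` operator matrices. -/
def matrixForm (w : I → H) : (I × I →₀ H →L[ℂ] H) →ₗ[ℂ] ℂ :=
  Finsupp.lsum ℂ fun p =>
    (innerSL ℂ (w p.1)).toLinearMap ∘ₗ (ContinuousLinearMap.apply ℂ H (w p.2)).toLinearMap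

lemma matrixForm_single (w : I → H) (i j : I) (T : H →L[ℂ] H) :
    matrixForm w (Finsupp.single (i, j) T) = ⟪w i, T (w j)⟫_ℂ := by
  simp [matrixForm]

lemma matrixForm_mapRange_eq_sum {B : Type*} [AddCommGroup B] [Module ℂ B]
    (σ : B →ₗ[ℂ] H →L[ℂ] H) (w : I → H) {f : I × I →₀ B} {S : Finset I}
    (hS : f.support ⊆ S ×ˢ S) :
    matrixForm w (Finsupp.mapRange.linearMap σ f) =
      ∑ i : S, ∑ j : S, ⟪w i, σ (f (i, j)) (w j)⟫_ℂ := by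
  rw [Finset.sum_coe_sort S fun i => ∑ j : S, ⟪w i, σ (f (i, j)) (w j)⟫_ℂ]
  simp_rw [fun i => Finset.sum_coe_sort S fun j => ⟪w i, σ (f (i, j)) (w j)⟫_ℂ]
  rw [← Finset.sum_product' S S fun i j => ⟪w i, σ (f (i, j)) (w j)⟫_ℂ, matrixForm,
    Finsupp.lsum_apply, Finsupp.mapRange.linearMap_apply, Finsupp.sum_mapRange_index (by simp),
    Finsupp.sum_of_support_subset _ hS _ (by simp)]
  rfl

variable (I H) in
/-- The cone of finitely supported operator matrices whose real part is positive. -/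
def accretiveCone : PointedCone ℝ (I × I →₀ H →L[ℂ] H) where
  carrier := {f | ∀ w : I → H, 0 ≤ (matrixForm w f).re}
  add_mem' hf hg w := by rw [map_add]; exact add_nonneg (hf w) (hg w)
  zero_mem' w := by simp
  smul_mem' c f hf w := by
    change 0 ≤ (matrixForm w ((c : ℝ) • f)).re
    rw [LinearMap.map_smul_of_tower, Complex.smul_re]
    exact mul_nonneg c.2 (hf w)

lemma mem_accretiveCone {f : I × I →₀ H →L[ℂ] H} :
    f ∈ accretiveCone I H ↔ ∀ w : I → H, 0 ≤ (matrixForm w f).re := Iff.rfl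

lemma exists_mapRange_add_mem_accretiveCone {B : Type*} [AddCommGroup B] [Module ℂ B]
    {j : B →ₗ[ℂ] H →L[ℂ] H} {e : B} (he : j e = 1) (f : I × I →₀ H →L[ℂ] H) :
    ∃ b : I × I →₀ B, Finsupp.mapRange.linearMap j b + f ∈ accretiveCone I H := by
  induction f using Finsupp.induction_linear with
  | zero => exact ⟨0, by simp⟩
  | add f g hf hg =>
    obtain ⟨b, hb⟩ := hf
    obtain ⟨c, hc⟩ := hg
    exact ⟨b + c, by rw [map_add, add_add_add_comm]; exact add_mem hb hc⟩
  | single p T =>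
    refine ⟨(‖T‖ : ℂ) • (Finsupp.single (p.1, p.1) e + Finsupp.single (p.2, p.2) e), fun w => ?_⟩
    have hsplit : (matrixForm w (Finsupp.mapRange.linearMap j ((‖T‖ : ℂ) •
        (Finsupp.single (p.1, p.1) e + Finsupp.single (p.2, p.2) e)) + Finsupp.single p T)).re =
        ‖T‖ * (‖w p.1‖ ^ 2 + ‖w p.2‖ ^ 2) + (⟪w p.1, T (w p.2)⟫_ℂ).re := by
      simp only [map_add, map_smul, Finsupp.mapRange.linearMap_apply, Finsupp.mapRange_single, he,
        matrixForm_single, one_apply_eq_self, inner_self_eq_norm_sq_to_K]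
      rw [matrixForm_single w p.1 p.2]
      simp [← Complex.ofReal_pow, mul_add]
    have hinner : -(‖w p.1‖ * (‖T‖ * ‖w p.2‖)) ≤ (⟪w p.1, T (w p.2)⟫_ℂ).re := by
      have h := (Complex.abs_re_le_norm _).trans (norm_inner_le_norm (𝕜 := ℂ) (w p.1) (T (w p.2)))
      grw [T.le_opNorm] at h
      exact (abs_le.mp h).1
    rw [hsplit]
    nlinarith [mul_nonneg (norm_nonneg T) (sq_nonneg (‖w p.1‖ - ‖w p.2‖)),
      mul_nonneg (norm_nonneg T) (sq_nonneg (‖w p.1‖ + ‖w p.2‖))]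

lemma nonneg_of_forall_matrixForm_nonneg {G : (I × I →₀ H →L[ℂ] H) →ₗ[ℂ] ℂ}
    (hG : ∀ f ∈ accretiveCone I H, 0 ≤ (G f).re) {f : I × I →₀ H →L[ℂ] H}
    (hf : ∀ w, 0 ≤ matrixForm w f) : 0 ≤ G f := by
  have him (w : I → H) : (matrixForm w f).im = 0 := (Complex.nonneg_iff.mp (hf w)).2.symm
  have hI := hG (Complex.I • f) (mem_accretiveCone.mpr fun w => by simp [him])
  have hnegI := hG (-Complex.I • f) (mem_accretiveCone.mpr fun w => by simp [him])
  simp only [map_smul, smul_eq_mul, neg_mul, Complex.neg_re, Complex.I_mul_re] at hI hnegI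
  exact Complex.nonneg_iff.mpr
    ⟨hG f fun w => (Complex.nonneg_iff.mp (hf w)).1, by linarith⟩

lemma matrixForm_sum_star_mul_nonneg [CompleteSpace H] (f : I →₀ H →L[ℂ] H) (w : I → H) :
    0 ≤ matrixForm w
      (f.sum fun i S => f.sum fun j T => Finsupp.single (i, j) (star S * T)) := by
  have hsq : matrixForm w
      (f.sum fun i S => f.sum fun j T => Finsupp.single (i, j) (star S * T)) =
      ⟪f.sum fun i S => S (w i), f.sum fun j T => T (w j)⟫_ℂ := by
    simp only [Finsupp.sum, map_sum, matrixForm_single, sum_inner, inner_sum,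
      mul_apply_eq_comp, ContinuousLinearMap.star_eq_adjoint,
      ContinuousLinearMap.adjoint_inner_right]
    exact Finset.sum_comm
  rw [hsq, inner_self_eq_norm_sq_to_K]
  exact pow_nonneg (Complex.zero_le_real.mpr (norm_nonneg (f.sum fun i S => S (w i)))) 2

end MatrixForm

section Arveson

variable {B H K : Type*} [AddCommGroup B] [Module ℂ B]
  [NormedAddCommGroup H] [InnerProductSpace ℂ H] [NormedAddCommGroup K] [InnerProductSpace ℂ K]

/-- Every matrix over `B` whose image under `j` has positive real part has an image under `σ` with
positive real part: the map `j b ↦ σ b` is completely positive, in a form which does not require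
the range of `j` to be closed under adjoints. The matrices are indexed by finite subsets of `K`. -/
def AccretivityTransfers (j : B →ₗ[ℂ] H →L[ℂ] H) (σ : B →ₗ[ℂ] K →L[ℂ] K) : Prop :=
  ∀ (S : Finset K) (b : Matrix S S B),
    (∀ w : S → H, 0 ≤ (∑ p, ∑ q, ⟪w p, j (b p q) (w q)⟫_ℂ).re) →
      ∀ u : S → K, 0 ≤ (∑ p, ∑ q, ⟪u p, σ (b p q) (u q)⟫_ℂ).re

variable {j : B →ₗ[ℂ] H →L[ℂ] H} {σ : B →ₗ[ℂ] K →L[ℂ] K}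

lemma AccretivityTransfers.re_matrixForm_nonneg (hjσ : AccretivityTransfers j σ)
    {b : K × K →₀ B} (hb : Finsupp.mapRange.linearMap j b ∈ accretiveCone K H) :
    0 ≤ (matrixForm id (Finsupp.mapRange.linearMap σ b)).re := by
  classical
  let S : Finset K := b.support.image Prod.fst ∪ b.support.image Prod.snd
  have hS : b.support ⊆ S ×ˢ S := fun p hp => Finset.mem_product.mpr
    ⟨Finset.mem_union_left _ (Finset.mem_image_of_mem _ hp),
      Finset.mem_union_right _ (Finset.mem_image_of_mem _ hp)⟩
  rw [matrixForm_mapRange_eq_sum σ id hS]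
  refine hjσ S (Matrix.of fun p q => b (p, q)) (fun w => ?_) _
  have h := mem_accretiveCone.mp hb (Function.extend Subtype.val w 0)
  simpa only [matrixForm_mapRange_eq_sum j _ hS, Subtype.val_injective.extend_apply,
    Matrix.of_apply] using h

variable [CompleteSpace H]

theorem AccretivityTransfers.exists_positiveKernel (hjσ : AccretivityTransfers j σ) {e : B}
    (hj : j e = 1) : ∃ κ : PositiveKernel K (H →L[ℂ] H), ∀ u v b, κ u v (j b) = ⟪u, σ b v⟫_ℂ := by
  obtain ⟨G, hGj, hG⟩ := exists_complex_riesz_extension (P := accretiveCone K H)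
    (j := Finsupp.mapRange.linearMap j) (s := matrixForm id ∘ₗ Finsupp.mapRange.linearMap σ)
    (fun b hb => hjσ.re_matrixForm_nonneg hb) (exists_mapRange_add_mem_accretiveCone hj)
  refine ⟨⟨fun u v => G ∘ₗ Finsupp.lsingle (u, v), fun f => ?_⟩, fun u v b => ?_⟩
  · have h := nonneg_of_forall_matrixForm_nonneg hG (matrixForm_sum_star_mul_nonneg f)
    simpa only [Finsupp.sum, map_sum, LinearMap.comp_apply, Finsupp.lsingle_apply] using h
  · have h := hGj (Finsupp.single (u, v) b)
    simpa [matrixForm_single] using h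

variable [CompleteSpace K]

-- Arveson's extension theorem. The functional `⟨u, σ(b) v⟩` extends to a positive kernel on
-- `B(H)`, and the extension of `σ` is the compression of its GNS representation to `K`.
theorem AccretivityTransfers.exists_completelyPositive_extension (hjσ : AccretivityTransfers j σ)
    {e : B} (hj : j e = 1) (hσ : σ e = 1) :
    ∃ Ψ : (H →L[ℂ] H) →ₗ[ℂ] (K →L[ℂ] K), (∀ b, Ψ (j b) = σ b) ∧ IsCompletelyPositive Ψ ∧
      CBBound (fun T => T) (fun T => T) Ψ 1 := by
  obtain ⟨κ, hκ⟩ := hjσ.exists_positiveKernel hj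
  obtain ⟨J, hJ⟩ := exists_linearIsometry_of_inner_map (J := fun u => κ.gnsVec u 1) fun u v => by
    rw [κ.inner_gnsVec, star_one, mul_one, ← hj, hκ, hσ, one_apply_eq_self]
  let W : K →L[ℂ] κ.GNS := J.toContinuousLinearMap
  refine ⟨compression W ∘ₗ (κ.gnsRep : (H →L[ℂ] H) →ₗ[ℂ] _), fun b => ?_,
    (isCompletelyPositive_compression W).comp (isCompletelyPositive_starHom κ.gnsRep), ?_⟩
  · refine ContinuousLinearMap.ext fun v => ext_inner_left ℂ fun u => ?_
    calc ⟪u, ContinuousLinearMap.adjoint W (κ.gnsRep (j b) (J v))⟫_ℂ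
      _ = ⟪κ.gnsVec u 1, κ.gnsRep (j b) (κ.gnsVec v 1)⟫_ℂ := by
        rw [ContinuousLinearMap.adjoint_inner_right, ← hJ, ← hJ]; rfl
      _ = ⟪u, σ b v⟫_ℂ := by
        rw [κ.gnsRep_gnsVec, κ.inner_gnsVec, star_one, one_mul, mul_one, hκ]
  · have hW : CBBound (fun T => T) (fun T => T) (compression W) (1 ^ 2) :=
      cbBound_compression J.norm_toContinuousLinearMap_le
    rw [one_pow] at hW
    exact hW.comp zero_le_one (cbBound_starHom κ.gnsRep)

end Arveson

end Extension

section KernelOperators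

variable {X H K : Type*} [NormedAddCommGroup H] [InnerProductSpace ℂ H]
  [NormedAddCommGroup K] [InnerProductSpace ℂ K]

lemma lpEval_apply (x : X) (f : lp (fun _ : X => H) 2) : lpEval x f = f x := rfl

lemma lpSingle_apply [h : DecidableEq X] (x : X) (ξ : H) :
    lpSingle x ξ = lp.single (E := fun _ : X => H) 2 x ξ := by
  rw [Subsingleton.elim h (Classical.decEq X)]
  rfl

lemma lpEval_lpSingle [DecidableEq X] (x y : X) (ξ : H) :
    lpEval x (lpSingle y ξ) = if x = y then ξ else 0 := by
  rw [lpEval_apply, lpSingle_apply, lp.single_apply, Pi.single_apply]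

lemma inner_lpSingle_left (x : X) (ξ : H) (f : lp (fun _ : X => H) 2) :
    ⟪lpSingle x ξ, f⟫_ℂ = ⟪ξ, lpEval x f⟫_ℂ := by
  classical
  rw [lpSingle_apply, lp.inner_single_left, lpEval_apply]

lemma ext_lpEval_lpSingle {S T : lp (fun _ : X => H) 2 →L[ℂ] lp (fun _ : X => K) 2}
    (h : ∀ x y ξ, lpEval x (S (lpSingle y ξ)) = lpEval x (T (lpSingle y ξ))) : S = T := by
  classical
  refine lp.ext_continuousLinearMap (p := 2) (by simp) fun y => ?_
  refine ContinuousLinearMap.ext fun ξ => lp.ext (funext fun x => ?_)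
  have hxy := h x y ξ
  rw [lpSingle_apply] at hxy
  exact hxy

lemma lpEval_elemOp_lpSingle [DecidableEq X] (s t : X) (T : H →L[ℂ] H) (x y : X) (ξ : H) :
    lpEval x (elemOp s t T (lpSingle y ξ)) = if (s, t) = (x, y) then T ξ else 0 := by
  simp only [elemOp, ContinuousLinearMap.comp_apply, lpEval_lpSingle, Prod.mk.injEq]
  split_ifs <;> simp_all

variable {A : Type*} [AddCommGroup A] [Module ℂ A]

/-- The Schur multiplication `k ↦ T_{Φ·k}`: a finitely supported kernel `k` is sent to the operator
on `ℓ²(X, K)` with matrix entries `Φ (x, y) (k (x, y))`. -/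
def kernelOp (Φ : X × X → A →ₗ[ℂ] K →L[ℂ] K) :
    (X × X →₀ A) →ₗ[ℂ] lp (fun _ : X => K) 2 →L[ℂ] lp (fun _ : X => K) 2 :=
  Finsupp.lsum ℂ fun p =>
    { toFun := fun a => elemOp p.1 p.2 (Φ p a)
      map_add' := fun a b => by simp [elemOp]
      map_smul' := fun c a => by simp [elemOp] }

lemma kernelOp_single (Φ : X × X → A →ₗ[ℂ] K →L[ℂ] K) (p : X × X) (a : A) :
    kernelOp Φ (Finsupp.single p a) = elemOp p.1 p.2 (Φ p a) :=
  Finsupp.lsum_single ..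

lemma lpEval_kernelOp_lpSingle (Φ : X × X → A →ₗ[ℂ] K →L[ℂ] K) (k : X × X →₀ A) (x y : X) (η : K) :
    lpEval x (kernelOp Φ k (lpSingle y η)) = Φ (x, y) (k (x, y)) η := by
  classical
  induction k using Finsupp.induction_linear with
  | zero => simp
  | add k l hk hl => simp only [map_add, _root_.add_apply, Finsupp.add_apply, hk, hl]
  | single p a =>
    rw [kernelOp_single, lpEval_elemOp_lpSingle, Finsupp.single_apply]
    split_ifs with h
    · rw [← h]
    · simp

lemma TOp_eq_kernelOp (Φ : X × X → A →ₗ[ℂ] K →L[ℂ] K) (k : X × X →₀ A) :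
    TOp (fun p => Φ p (k p)) = kernelOp Φ k := by
  refine finsum_eq_sum_of_support_subset _ fun p hp => Finsupp.mem_support_iff.mpr fun h => hp ?_
  simp [h, elemOp]

end KernelOperators

section NondegenerateRepresentations

open Filter Topology
open scoped CStarAlgebra

variable {X A H K : Type*} [NonUnitalCStarAlgebra A]
  [NormedAddCommGroup H] [InnerProductSpace ℂ H] [CompleteSpace H]
  [NormedAddCommGroup K] [InnerProductSpace ℂ K] [CompleteSpace K]

lemma NondegenerateRep.tendsto_apply {ρ : A →⋆ₙₐ[ℂ] K →L[ℂ] K} (hρ : NondegenerateRep ρ)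
    {l : Filter A} (hl : ∀ᶠ e in l, ‖e‖ ≤ 1) (hmul : ∀ a, Tendsto (fun e => e * a) l (𝓝 a))
    (u : K) : Tendsto (fun e => ρ e u) l (𝓝 u) := by
  have hspan : ∀ v ∈ Submodule.span ℂ {ξ : K | ∃ (a : A) (v : K), ρ a v = ξ},
      Tendsto (fun e => ρ e v) l (𝓝 v) := by
    intro v hv
    induction hv using Submodule.span_induction with
    | mem v hv =>
      obtain ⟨a, w, rfl⟩ := hv
      have hcont : Continuous fun c => ρ c w := (map_continuous ρ).clm_apply continuous_const
      simpa only [Function.comp_def, map_mul, mul_apply_eq_comp] using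
        (hcont.tendsto a).comp (hmul a)
    | zero => simpa only [map_zero] using tendsto_const_nhds
    | add v w _ _ hv hw => simpa only [map_add] using hv.add hw
    | smul z v _ hv => simpa only [map_smul] using hv.const_smul z
  refine Metric.tendsto_nhds.mpr fun ε hε => ?_
  obtain ⟨v, hv, huv⟩ := Metric.dense_iff.mp hρ u (ε / 3) (by positivity)
  filter_upwards [hl, Metric.tendsto_nhds.mp (hspan v huv) (ε / 3) (by positivity)] with e he hev
  have hcontr : ‖ρ e (u - v)‖ ≤ ‖u - v‖ := by
    grw [(ρ e).le_opNorm, NonUnitalStarAlgHom.norm_apply_le, he, one_mul]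
  rw [Metric.mem_ball, dist_comm] at hv
  rw [dist_eq_norm] at hv hev ⊢
  calc ‖ρ e u - u‖ = ‖ρ e (u - v) + (ρ e v - v) - (u - v)‖ := by rw [map_sub]; abel_nf
    _ ≤ ‖ρ e (u - v)‖ + ‖ρ e v - v‖ + ‖u - v‖ := by grw [norm_sub_le, norm_add_le]
    _ < ε := by linarith

variable (X) in
/-- The operators `T_k + z` for finitely supported kernels `k` over `A` and scalars `z`, where `A`
acts on `H` through `σ`. The scalars supply the unit required by Arveson's theorem. -/
def unitalKernelOp (σ : A →⋆ₙₐ[ℂ] H →L[ℂ] H) :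
    (X × X →₀ A) × ℂ →ₗ[ℂ] lp (fun _ : X => H) 2 →L[ℂ] lp (fun _ : X => H) 2 :=
  (kernelOp fun _ => (σ : A →ₗ[ℂ] H →L[ℂ] H)).coprod (LinearMap.toSpanSingleton ℂ _ 1)

open Classical in
/-- The `(x, y)` entry of `T_k + z`, multiplied by `star e` on the left and by `e` on the right:
unlike the entry itself it lies in `A`. -/
def cutoffEntry (e : A) (b : (X × X →₀ A) × ℂ) (x y : X) : A :=
  star e * (b.1 (x, y) * e + if x = y then b.2 • e else 0)

lemma inner_unitalKernelOp_cutoff (σ : A →⋆ₙₐ[ℂ] H →L[ℂ] H) (e : A) (b : (X × X →₀ A) × ℂ)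
    (x y : X) (ξ η : H) :
    ⟪lpSingle x (σ e ξ), unitalKernelOp X σ b (lpSingle y (σ e η))⟫_ℂ
      = ⟪ξ, σ (cutoffEntry e b x y) η⟫_ℂ := by
  classical
  have hentry : lpEval x (unitalKernelOp X σ b (lpSingle y (σ e η)))
      = σ (b.1 (x, y) * e + if x = y then b.2 • e else 0) η := by
    simp only [unitalKernelOp, LinearMap.coprod_apply, LinearMap.toSpanSingleton_apply,
      _root_.add_apply, _root_.smul_apply, one_apply_eq_self, map_add, map_smul, map_mul,
      lpEval_kernelOp_lpSingle, lpEval_lpSingle]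
    split_ifs <;> simp
  rw [inner_lpSingle_left, hentry, cutoffEntry, map_mul, map_star, mul_apply_eq_comp,
    ContinuousLinearMap.star_eq_adjoint, ContinuousLinearMap.adjoint_inner_right]

variable {ν : Type*} [Fintype ν]

lemma sum_inner_unitalKernelOp_cutoff (σ : A →⋆ₙₐ[ℂ] H →L[ℂ] H) (e : A)
    (b : Matrix ν ν ((X × X →₀ A) × ℂ)) (F : Finset X) (w : ν × F → H) :
    ∑ p, ∑ q, ⟪∑ x : F, lpSingle (x : X) (σ e (w (p, x))),
        unitalKernelOp X σ (b p q) (∑ y : F, lpSingle (y : X) (σ e (w (q, y))))⟫_ℂ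
      = ∑ s : ν × F, ∑ t : ν × F,
        ⟪w s, σ (cutoffEntry e (b s.1 t.1) (s.2 : X) (t.2 : X)) (w t)⟫_ℂ := by
  simp only [map_sum, sum_inner, inner_sum, inner_unitalKernelOp_cutoff, Fintype.sum_prod_type]
  exact Finset.sum_congr rfl fun p _ =>
    (Finset.sum_congr rfl fun q _ => Finset.sum_comm).trans Finset.sum_comm

variable {ι : A →⋆ₙₐ[ℂ] H →L[ℂ] H} {ρ : A →⋆ₙₐ[ℂ] K →L[ℂ] K}

lemma re_sum_inner_unitalKernelOp_cutoff_nonneg (hι : Function.Injective ι)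
    {b : Matrix ν ν ((X × X →₀ A) × ℂ)}
    (hb : ∀ w : ν → lp (fun _ : X => H) 2,
      0 ≤ (∑ p, ∑ q, ⟪w p, unitalKernelOp X ι (b p q) (w q)⟫_ℂ).re)
    (ρ : A →⋆ₙₐ[ℂ] K →L[ℂ] K) (e : A) (F : Finset X) (u : ν → X → K) :
    0 ≤ (∑ p, ∑ q, ⟪∑ x ∈ F, lpSingle x (ρ e (u p x)),
      unitalKernelOp X ρ (b p q) (∑ y ∈ F, lpSingle y (ρ e (u q y)))⟫_ℂ).re := by
  simp only [← Finset.sum_coe_sort F]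
  rw [sum_inner_unitalKernelOp_cutoff ρ e b F fun s => u s.1 s.2]
  refine re_sum_inner_map_nonneg hι ρ
    (M := Matrix.of fun s t : ν × F => cutoffEntry e (b s.1 t.1) (s.2 : X) (t.2 : X))
    (fun w => ?_) _
  simpa only [sum_inner_unitalKernelOp_cutoff, Matrix.of_apply] using
    hb fun p => ∑ x : F, lpSingle (x : X) (ι e (w (p, x)))

-- First `e` runs through an approximate unit, then `F` exhausts `X`.
theorem accretivityTransfers_unitalKernelOp (hι : Function.Injective ι)
    (hρ : NondegenerateRep ρ) :
    AccretivityTransfers (unitalKernelOp X ι) (unitalKernelOp X ρ) := by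
  classical
  intro S b hb u
  obtain ⟨l, hne, hcontr, hmul, -⟩ := exists_contractive_approximateUnit A
  let Q (v : S → lp (fun _ : X => K) 2) : ℝ :=
    (∑ p, ∑ q, ⟪v p, unitalKernelOp X ρ (b p q) (v q)⟫_ℂ).re
  have hQ : Continuous Q := by fun_prop
  have htrunc (F : Finset X) : 0 ≤ Q fun p => ∑ x ∈ F, lpSingle x (u p x) := by
    refine ge_of_tendsto' ((hQ.tendsto _).comp (x := l) (tendsto_pi_nhds.mpr fun p =>
      tendsto_finsetSum F fun x _ => ((lpSingle x).continuous.tendsto _).comp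
        (hρ.tendsto_apply hcontr hmul (u p x)))) fun e => ?_
    exact re_sum_inner_unitalKernelOp_cutoff_nonneg hι hb ρ e F fun p => u p
  refine ge_of_tendsto' ((hQ.tendsto u).comp (x := atTop) (tendsto_pi_nhds.mpr fun p => ?_)) htrunc
  have hsum : HasSum (fun x => lpSingle x (u p x)) (u p : lp (fun _ : X => K) 2) := by
    simpa only [lpSingle_apply] using lp.hasSum_single (p := 2) (by simp) (u p)
  simpa only [HasSum, SummationFilter.unconditional_filter] using hsum

end NondegenerateRepresentations

section DiagonalOperators

variable {X H K : Type*} [NormedAddCommGroup H] [InnerProductSpace ℂ H]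
  [NormedAddCommGroup K] [InnerProductSpace ℂ K]
  {V : X → H →L[ℂ] K} {C : ℝ}

lemma norm_apply_le_norm_smul_apply (hV : ∀ x, ‖V x‖ ≤ C) (f : lp (fun _ : X => H) 2) (x : X) :
    ‖V x (f x)‖ ≤ ‖((C : ℂ) • f) x‖ := by
  have hC : 0 ≤ C := (norm_nonneg _).trans (hV x)
  rw [lp.coeFn_smul, Pi.smul_apply, norm_smul, Complex.norm_of_nonneg hC]
  exact (V x).le_of_opNorm_le (hV x) (f x)

/-- The diagonal operator `ℓ²(X, H) → ℓ²(X, K)` with entries `V x`. -/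
def lpDiag (V : X → H →L[ℂ] K) (hC : 0 ≤ C) (hV : ∀ x, ‖V x‖ ≤ C) :
    lp (fun _ : X => H) 2 →L[ℂ] lp (fun _ : X => K) 2 :=
  LinearMap.mkContinuous
    { toFun := fun f => ⟨fun x => V x (f x),
        (lp.memℓp ((C : ℂ) • f)).mono' (norm_apply_le_norm_smul_apply hV f)⟩
      map_add' := fun f g => lp.ext (funext fun x => (V x).map_add (f x) (g x))
      map_smul' := fun c f => lp.ext (funext fun x => (V x).map_smul c (f x)) }
    C fun f => by
      refine (lp.norm_mono two_ne_zero (norm_apply_le_norm_smul_apply hV f)).trans_eq ?_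
      rw [norm_smul, Complex.norm_of_nonneg hC]

lemma norm_lpDiag_le (hC : 0 ≤ C) (hV : ∀ x, ‖V x‖ ≤ C) : ‖lpDiag V hC hV‖ ≤ C :=
  LinearMap.mkContinuous_norm_le _ hC _

lemma lpDiag_lpSingle (hC : 0 ≤ C) (hV : ∀ x, ‖V x‖ ≤ C) (x : X) (ξ : H) :
    lpDiag V hC hV (lpSingle x ξ) = lpSingle x (V x ξ) := by
  classical
  refine lp.ext (funext fun y => ?_)
  change V y (lpEval y (lpSingle x ξ)) = lpEval y (lpSingle x (V x ξ))
  rw [lpEval_lpSingle, lpEval_lpSingle]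
  split_ifs with h
  · rw [h]
  · exact map_zero _

variable [CompleteSpace H] [CompleteSpace K]

lemma lpEval_adjoint_lpDiag (hC : 0 ≤ C) (hV : ∀ x, ‖V x‖ ≤ C) (x : X)
    (g : lp (fun _ : X => K) 2) :
    lpEval x (ContinuousLinearMap.adjoint (lpDiag V hC hV) g)
      = ContinuousLinearMap.adjoint (V x) (lpEval x g) := by
  refine ext_inner_left ℂ fun ξ => ?_
  rw [ContinuousLinearMap.adjoint_inner_right, ← inner_lpSingle_left, ← inner_lpSingle_left,
    ContinuousLinearMap.adjoint_inner_right, lpDiag_lpSingle]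

variable {A : Type*} [AddCommGroup A] [Module ℂ A]

lemma compression_lpDiag_kernelOp (hC : 0 ≤ C) (hV : ∀ x, ‖V x‖ ≤ C)
    {Φ : X × X → A →ₗ[ℂ] K →L[ℂ] K} {Θ : X × X → A →ₗ[ℂ] H →L[ℂ] H}
    (h : ∀ x y a, Θ (x, y) a = ContinuousLinearMap.adjoint (V x) ∘L Φ (x, y) a ∘L V y)
    (k : X × X →₀ A) : compression (lpDiag V hC hV) (kernelOp Φ k) = kernelOp Θ k := by
  refine ext_lpEval_lpSingle fun x y ξ => ?_
  rw [compression_apply, ContinuousLinearMap.comp_apply, ContinuousLinearMap.comp_apply,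
    lpEval_adjoint_lpDiag, lpDiag_lpSingle, lpEval_kernelOp_lpSingle, lpEval_kernelOp_lpSingle, h]
  rfl

end DiagonalOperators

section SchurExtension

variable {X A H K : Type*} [NonUnitalCStarAlgebra A]
  [NormedAddCommGroup H] [InnerProductSpace ℂ H] [CompleteSpace H]
  [NormedAddCommGroup K] [InnerProductSpace ℂ K] [CompleteSpace K]
  {ι : A →⋆ₙₐ[ℂ] H →L[ℂ] H} {φ : X → X → A →ₗ[ℂ] H →L[ℂ] H}

lemma TKer_eq_kernelOp (ι : A →⋆ₙₐ[ℂ] H →L[ℂ] H) (k : X × X →₀ A) :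
    TKer ι k = kernelOp (fun _ => (ι : A →ₗ[ℂ] H →L[ℂ] H)) k :=
  TOp_eq_kernelOp (fun _ => (ι : A →ₗ[ℂ] H →L[ℂ] H)) k

/-- `Ψ` extends the Schur multiplication map `S_φ : T_k ↦ T_{φ·k}` to all bounded operators. -/
def IsSchurExtension (ι : A →⋆ₙₐ[ℂ] H →L[ℂ] H) (φ : X → X → A →ₗ[ℂ] H →L[ℂ] H)
    (Ψ : (lp (fun _ : X => H) 2 →L[ℂ] lp (fun _ : X => H) 2) →ₗ[ℂ]
      (lp (fun _ : X => H) 2 →L[ℂ] lp (fun _ : X => H) 2)) : Prop :=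
  ∀ k : X × X → A, (Function.support k).Finite →
    Ψ (TKer ι k) = TOp (fun p => φ p.1 p.2 (k p))

variable {Ψ : (lp (fun _ : X => H) 2 →L[ℂ] lp (fun _ : X => H) 2) →ₗ[ℂ]
  (lp (fun _ : X => H) 2 →L[ℂ] lp (fun _ : X => H) 2)}

lemma IsSchurExtension.map_matrix_TKer (hΨ : IsSchurExtension ι φ Ψ) {n : ℕ}
    {k : Fin n → Fin n → X × X → A} (hk : ∀ i j, (Function.support (k i j)).Finite) :
    (Matrix.of fun i j => TKer ι (k i j)).map Ψ
      = Matrix.of fun i j => TOp fun p => φ p.1 p.2 (k i j p) :=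
  Matrix.ext fun i j => hΨ (k i j) (hk i j)

lemma IsSchurExtension.schurCP (hΨ : IsSchurExtension ι φ Ψ) (hcp : IsCompletelyPositive Ψ) :
    SchurCP ι φ := fun n _ hk hpos => hΨ.map_matrix_TKer hk ▸ hcp n _ hpos

lemma IsSchurExtension.schurBound (hΨ : IsSchurExtension ι φ Ψ) {C : ℝ}
    (hcb : CBBound (fun T => T) (fun T => T) Ψ C) : SchurBound ι φ C :=
  fun n _ hk => hΨ.map_matrix_TKer hk ▸ hcb n _

theorem exists_isSchurExtension (hι : Function.Injective ι) {ρ : A →⋆ₙₐ[ℂ] K →L[ℂ] K}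
    (hρ : NondegenerateRep ρ) {V : X → H →L[ℂ] K} {C : ℝ} (hC : 0 ≤ C) (hV : ∀ x, ‖V x‖ ≤ C)
    (hφ : ∀ x y a, φ x y a = ContinuousLinearMap.adjoint (V x) ∘L ρ a ∘L V y) :
    ∃ Ψ, IsSchurExtension ι φ Ψ ∧ IsCompletelyPositive Ψ ∧
      CBBound (fun T => T) (fun T => T) Ψ (C ^ 2) := by
  obtain ⟨Ψ, hΨ, hcp, hcb⟩ := (accretivityTransfers_unitalKernelOp (X := X) hι
    hρ).exists_completelyPositive_extension (e := (0, 1)) (by simp [unitalKernelOp])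
    (by simp [unitalKernelOp])
  refine ⟨compression (lpDiag V hC hV) ∘ₗ Ψ, fun k hk => ?_,
    (isCompletelyPositive_compression _).comp hcp,
    (cbBound_compression (norm_lpDiag_le hC hV)).comp (sq_nonneg C) hcb⟩
  lift k to X × X →₀ A using hk
  have hΨk : Ψ (TKer ι k) = kernelOp (fun _ => (ρ : A →ₗ[ℂ] K →L[ℂ] K)) k := by
    simpa [unitalKernelOp, TKer_eq_kernelOp] using hΨ (k, 0)
  rw [LinearMap.comp_apply, hΨk, TOp_eq_kernelOp (fun p => φ p.1 p.2)]
  exact compression_lpDiag_kernelOp hC hV hφ k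

end SchurExtension

section Sampling

variable {X H : Type*} [NormedAddCommGroup H] [InnerProductSpace ℂ H]

lemma norm_lpEval_le (x : X) : ‖(lpEval x : lp (fun _ : X => H) 2 →L[ℂ] H)‖ ≤ 1 :=
  LinearMap.mkContinuous_norm_le _ zero_le_one _

lemma norm_lpSingle_le (x : X) : ‖(lpSingle x : H →L[ℂ] lp (fun _ : X => H) 2)‖ ≤ 1 :=
  LinearMap.mkContinuous_norm_le _ zero_le_one _

lemma lpEval_comp_elemOp_comp_lpSingle (x y : X) (T : H →L[ℂ] H) :
    lpEval x ∘L elemOp x y T ∘L lpSingle y = T := by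
  classical
  exact ContinuousLinearMap.ext fun ξ => (lpEval_elemOp_lpSingle x y T x y ξ).trans (if_pos rfl)

lemma TOp_mul_single {A : Type*} [AddCommGroup A] [Module ℂ A] (φ : X → X → A →ₗ[ℂ] H →L[ℂ] H)
    (q : X × X) (a : A) :
    TOp (fun p => φ p.1 p.2 (Finsupp.single q a p)) = elemOp q.1 q.2 (φ q.1 q.2 a) := by
  rw [TOp_eq_kernelOp (fun p => φ p.1 p.2), kernelOp_single]

variable [CompleteSpace H]

lemma adjoint_lpSingle (x : X) :
    ContinuousLinearMap.adjoint (lpSingle x : H →L[ℂ] lp (fun _ : X => H) 2) = lpEval x := by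
  refine ContinuousLinearMap.ext fun f => ext_inner_left ℂ fun ξ => ?_
  rw [ContinuousLinearMap.adjoint_inner_right, inner_lpSingle_left]

lemma adjoint_lpEval (x : X) :
    ContinuousLinearMap.adjoint (lpEval x : lp (fun _ : X => H) 2 →L[ℂ] H) = lpSingle x := by
  rw [← adjoint_lpSingle, ContinuousLinearMap.adjoint_adjoint]

variable {ν : Type*}

lemma of_elemOp_eq_compress (x : ν → X) (P : Matrix ν ν (H →L[ℂ] H)) :
    (Matrix.of fun i j => elemOp (x i) (x j) (P i j)) = Matrix.of fun i j =>
      ContinuousLinearMap.adjoint (lpEval (x i)) ∘L P i j ∘L lpEval (x j) := by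
  simp only [adjoint_lpEval, elemOp]

lemma eq_compress_of_elemOp (x : ν → X) (P : Matrix ν ν (H →L[ℂ] H)) :
    P = Matrix.of fun i j => ContinuousLinearMap.adjoint (lpSingle (x i)) ∘L
      (Matrix.of fun i j => elemOp (x i) (x j) (P i j)) i j ∘L lpSingle (x j) := by
  simp only [adjoint_lpSingle, Matrix.of_apply, lpEval_comp_elemOp_comp_lpSingle]
  rfl

variable [Fintype ν]

lemma matPos_of_elemOp_iff {x : ν → X} {P : Matrix ν ν (H →L[ℂ] H)} :
    MatPos (Matrix.of fun i j => elemOp (x i) (x j) (P i j)) ↔ MatPos P := by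
  refine ⟨fun h => ?_, fun h => ?_⟩
  · rw [eq_compress_of_elemOp x P]
    exact h.compress _
  · rw [of_elemOp_eq_compress]
    exact h.compress _

lemma norm_matOp_of_elemOp (x : ν → X) (P : Matrix ν ν (H →L[ℂ] H)) :
    ‖matOp (Matrix.of fun i j => elemOp (x i) (x j) (P i j))‖ = ‖matOp P‖ := by
  refine le_antisymm ?_ ?_
  · have h := norm_matOp_compress_le (H := lp (fun _ : X => H) 2) (W := fun i => lpEval (x i))
      zero_le_one (fun i => norm_lpEval_le (x i)) P
    rwa [one_pow, one_mul, ← of_elemOp_eq_compress] at h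
  · have h := norm_matOp_compress_le (K := lp (fun _ : X => H) 2) (W := fun i => lpSingle (x i))
      zero_le_one (fun i => norm_lpSingle_le (x i))
      (Matrix.of fun i j => elemOp (x i) (x j) (P i j))
    rwa [one_pow, one_mul, ← eq_compress_of_elemOp] at h

variable {A : Type*} [NonUnitalCStarAlgebra A] {ι : A →⋆ₙₐ[ℂ] H →L[ℂ] H}
  {φ : X → X → A →ₗ[ℂ] H →L[ℂ] H}

lemma TKer_single (q : X × X) (a : A) :
    TKer ι (Finsupp.single q a) = elemOp q.1 q.2 (ι a) := by
  rw [TKer_eq_kernelOp, kernelOp_single]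
  rfl

lemma SchurCP.positiveType (h : SchurCP ι φ) : PositiveType φ := by
  intro m x a ha
  have hpos := h m (fun i j => Finsupp.single (x i, x j) (a i j))
    (fun i j => Finsupp.hasFiniteSupport _)
  simp only [TKer_single, TOp_mul_single] at hpos
  refine matPos_of_elemOp_iff.mp (hpos ?_)
  exact matPos_of_elemOp_iff.mpr (matPos_iff_nonneg_matOp.mpr (ha.nonneg_matOp_map ι))

lemma SchurBound.cbBound_diagonal {C : ℝ} (h : SchurBound ι φ C) (x : X) :
    CBBound (fun a => ι a) (fun T => T) (φ x x) C := by
  intro n M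
  have hnorm := h n (fun i j => Finsupp.single (x, x) (M i j))
    (fun i j => Finsupp.hasFiniteSupport _)
  simp only [TKer_single, TOp_mul_single] at hnorm
  have hι := norm_matOp_of_elemOp (fun _ => x) (M.map ι)
  have hφ := norm_matOp_of_elemOp (fun _ => x) (M.map (φ x x))
  simp only [Matrix.map_apply] at hι hφ
  rwa [hι, hφ] at hnorm

lemma positiveType_of_eq_compression {K : Type*} [NormedAddCommGroup K] [InnerProductSpace ℂ K]
    [CompleteSpace K] {ρ : A →⋆ₙₐ[ℂ] K →L[ℂ] K} {V : X → H →L[ℂ] K}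
    (hφ : ∀ x y a, φ x y a = ContinuousLinearMap.adjoint (V x) ∘L ρ a ∘L V y) :
    PositiveType φ := by
  intro m x a ha
  have hρa : MatPos (a.map ρ) := matPos_iff_nonneg_matOp.mpr (ha.nonneg_matOp_map ρ)
  simp only [hφ]
  exact hρa.compress fun i => V (x i)

end Sampling

section CompletelyBoundedNorm

variable {H : Type*} [NormedAddCommGroup H] [InnerProductSpace ℂ H]

lemma norm_matOp_fin_one (T : H →L[ℂ] H) : ‖matOp (Matrix.of fun _ _ : Fin 1 => T)‖ = ‖T‖ := by
  have hdiag : matOp (Matrix.of fun _ _ : Fin 1 => T) = piDiag fun _ => T := by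
    ext w i
    simp [matOp_apply, piDiag_apply, Subsingleton.elim i 0]
  refine le_antisymm (hdiag ▸ norm_piDiag_le (norm_nonneg T) fun _ => le_rfl) ?_
  refine T.opNorm_le_bound (ContinuousLinearMap.opNorm_nonneg _) fun ξ => ?_
  have h := (matOp (Matrix.of fun _ _ : Fin 1 => T)).le_opNorm (WithLp.toLp 2 fun _ => ξ)
  simpa [PiLp.norm_eq_of_L2, matOp_apply] using h

variable {K A B : Type*} [NormedAddCommGroup K] [InnerProductSpace ℂ K]
  [AddCommMonoid A] [Module ℂ A] [AddCommMonoid B] [Module ℂ B]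
  {ιA : A → H →L[ℂ] H} {ιB : B → K →L[ℂ] K} {Φ : A →ₗ[ℂ] B} {C : ℝ}

lemma CBBound.norm_le (h : CBBound ιA ιB Φ C) (a : A) : ‖ιB (Φ a)‖ ≤ C * ‖ιA a‖ := by
  have h₁ : ‖matOp (Matrix.of fun _ _ : Fin 1 => ιB (Φ a))‖ ≤
      C * ‖matOp (Matrix.of fun _ _ : Fin 1 => ιA a)‖ := h 1 (Matrix.of fun _ _ => a)
  rwa [norm_matOp_fin_one, norm_matOp_fin_one] at h₁

lemma CBBound.cbNorm_le (hC : 0 ≤ C) (h : CBBound ιA ιB Φ C) : cbNorm ιA ιB Φ ≤ C :=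
  csInf_le ⟨0, fun _ hc => hc.1⟩ ⟨hC, h⟩

lemma cbNorm_nonneg : 0 ≤ cbNorm ιA ιB Φ := Real.sInf_nonneg fun _ hc => hc.1

lemma IsCB.cbBound_cbNorm (h : IsCB ιA ιB Φ) : CBBound ιA ιB Φ (cbNorm ιA ιB Φ) := by
  have hclosed : IsClosed {c : ℝ | 0 ≤ c ∧ CBBound ιA ιB Φ c} := by
    simp only [CBBound, Set.ofPred_and, Set.ofPred_forall]
    refine isClosed_Ici.inter (isClosed_iInter fun n => isClosed_iInter fun M => ?_)
    exact isClosed_le continuous_const (continuous_id.mul continuous_const)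
  exact (hclosed.csInf_mem h ⟨0, fun _ hc => hc.1⟩).2

end CompletelyBoundedNorm

section Main

universe u v w

variable {A : Type u} [NonUnitalCStarAlgebra A]
  {H : Type v} [NormedAddCommGroup H] [InnerProductSpace ℂ H] [CompleteSpace H]
  {X : Type w} {ι : A →⋆ₙₐ[ℂ] H →L[ℂ] H} {φ : X → X → A →ₗ[ℂ] H →L[ℂ] H} {C : ℝ}

theorem PositiveType.exists_stinespring_of_cbBound (hφ : PositiveType φ) (hC : 0 ≤ C)
    (hbdd : ∀ x y, CBBound (fun a => ι a) (fun T => T) (φ x y) C) :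
    ∃ R : OpValuedRep.{u, v, w} A H X, NondegenerateRep R.ρ ∧
      (∀ x, ‖R.V x‖ ≤ √(⨆ x, cbNorm (fun a => ι a) (fun T => T) (φ x x))) ∧ R.W = R.V ∧
      ∀ x y a, φ x y a = ContinuousLinearMap.adjoint (R.V x) ∘L R.ρ a ∘L R.V y := by
  have hnorm {x y : X} {c : ℝ} (hc0 : 0 ≤ c)
      (hc : CBBound (fun a => ι a) (fun T => T) (φ x y) c) (a : A) : ‖φ x y a‖ ≤ c * ‖a‖ := by
    grw [hc.norm_le a, NonUnitalStarAlgHom.norm_apply_le ι a]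
  obtain ⟨R, hR, hV, hW, hrep⟩ := hφ.exists_stinespring
    (fun x y => AddMonoidHomClass.continuous_of_bound (φ x y) C (hnorm hC (hbdd x y)))
    (fun x => cbNorm_nonneg)
    (fun x => hnorm cbNorm_nonneg (IsCB.cbBound_cbNorm ⟨C, hC, hbdd x x⟩))
  have hsup : BddAbove (Set.range fun x => cbNorm (fun a => ι a) (fun T => T) (φ x x)) :=
    ⟨C, Set.forall_mem_range.mpr fun x => (hbdd x x).cbNorm_le hC⟩
  exact ⟨R, hR, fun x => (hV x).trans (Real.sqrt_le_sqrt (le_ciSup hsup x)), hW, hrep⟩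

theorem PositiveType.exists_schurExtension (hι : Function.Injective ι) (hφ : PositiveType φ)
    (hC : 0 ≤ C) (hbdd : ∀ x y, CBBound (fun a => ι a) (fun T => T) (φ x y) C) :
    ∃ Ψ, IsSchurExtension ι φ Ψ ∧ IsCompletelyPositive Ψ ∧
      CBBound (fun T => T) (fun T => T) Ψ
        (⨆ x, cbNorm (fun a => ι a) (fun T => T) (φ x x)) := by
  obtain ⟨R, hR, hV, -, hrep⟩ := hφ.exists_stinespring_of_cbBound hC hbdd
  have h := exists_isSchurExtension hι hR (Real.sqrt_nonneg _) hV hrep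
  rwa [Real.sq_sqrt (Real.iSup_nonneg fun _ => cbNorm_nonneg)] at h

lemma IsSchurMultiplier.iSup_cbNorm_le_schurNorm (h : IsSchurMultiplier ι φ) :
    ⨆ x, cbNorm (fun a => ι a) (fun T => T) (φ x x) ≤ schurNorm ι φ :=
  Real.iSup_le (fun x => le_csInf h fun _ hc => (hc.2.cbBound_diagonal x).cbNorm_le hc.1)
    (Real.sInf_nonneg fun _ hc => hc.1)

lemma SchurBound.schurNorm_eq_iSup_cbNorm
    (h : SchurBound ι φ (⨆ x, cbNorm (fun a => ι a) (fun T => T) (φ x x))) :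
    IsSchurMultiplier ι φ ∧
      schurNorm ι φ = ⨆ x, cbNorm (fun a => ι a) (fun T => T) (φ x x) := by
  have hmem : _ ∈ {c : ℝ | 0 ≤ c ∧ SchurBound ι φ c} :=
    ⟨Real.iSup_nonneg fun _ => cbNorm_nonneg, h⟩
  have hmul : IsSchurMultiplier ι φ := ⟨_, hmem⟩
  exact ⟨hmul, (csInf_le ⟨0, fun _ hc => hc.1⟩ hmem).antisymm hmul.iSup_cbNorm_le_schurNorm⟩

end Main

theorem positiveType_tfae_general
    {X : Type*} {H : Type*} [NormedAddCommGroup H] [InnerProductSpace ℂ H]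
    [CompleteSpace H] {A : Type*} [NonUnitalCStarAlgebra A]
    (ι : A →⋆ₙₐ[ℂ] (H →L[ℂ] H)) (hι : Function.Injective ι)
    (φ : X → X → (A →ₗ[ℂ] (H →L[ℂ] H)))
    (hbdd : ∃ C : ℝ, 0 ≤ C ∧ ∀ x y : X, CBBound (fun a => ι a) (fun T => T) (φ x y) C) :
    (PositiveType φ ↔
      (IsSchurMultiplier ι φ ∧ SchurCP ι φ ∧
        schurNorm ι φ = ⨆ x : X, cbNorm (fun a => ι a) (fun T => T) (φ x x))) ∧
    (PositiveType φ ↔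
      ∃ R : OpValuedRep A H X, NondegenerateRep R.ρ ∧
        (∃ C : ℝ, ∀ x : X, ‖R.V x‖ ≤ C) ∧ R.W = R.V ∧
        ∀ (x y : X) (a : A),
          φ x y a = (ContinuousLinearMap.adjoint (R.V x)) ∘L (R.ρ a) ∘L (R.V y)) ∧
    (PositiveType φ → ∃ Ψ, IsSchurExtension ι φ Ψ ∧ IsCompletelyPositive Ψ) := by
  obtain ⟨C, hC, hbdd⟩ := hbdd
  refine ⟨⟨fun hφ => ?_, fun h => h.2.1.positiveType⟩, ⟨fun hφ => ?_, ?_⟩, fun hφ => ?_⟩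
  · obtain ⟨Ψ, hΨ, hcp, hcb⟩ := hφ.exists_schurExtension hι hC hbdd
    obtain ⟨hmul, hnorm⟩ := (hΨ.schurBound hcb).schurNorm_eq_iSup_cbNorm
    exact ⟨hmul, hΨ.schurCP hcp, hnorm⟩
  · obtain ⟨R, hR, hV, hW, hrep⟩ := hφ.exists_stinespring_of_cbBound hC hbdd
    exact ⟨R, hR, ⟨_, hV⟩, hW, hrep⟩
  · rintro ⟨R, -, -, -, hrep⟩
    exact positiveType_of_eq_compression hrep
  · obtain ⟨Ψ, hΨ, hcp, -⟩ := hφ.exists_schurExtension hι hC hbdd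
    exact ⟨Ψ, hΨ, hcp⟩

/-- **Theorem 2.5.** For a bounded function `φ : X × X → CB(A,B(H))` the following are
equivalent: (i) `φ` is of positive type; (ii) `φ` is a Schur `A`-multiplier, `S_φ` is
completely positive and `‖S_φ‖_cb = sup_x ‖φ(x,x)‖_cb`; (iii) there are a Hilbert space
`K`, a non-degenerate *-representation `ρ : A → B(K)` and a bounded `V : X → B(H,K)`
with `φ(x,y)(a) = V(x)* ρ(a) V(y)`.  Moreover, in this case the canonical extension of
`S_φ` to `B(ℓ²(X)) ⊗̄ B(H)` is completely positive. -/
theorem positiveType_tfae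
    {X : Type*} {H : Type*} [NormedAddCommGroup H] [InnerProductSpace ℂ H]
    [CompleteSpace H] {A : Type*} [NonUnitalCStarAlgebra A]
    (ι : A →⋆ₙₐ[ℂ] (H →L[ℂ] H)) (hisom : ∀ a : A, ‖ι a‖ = ‖a‖)
    (hnd : NondegenerateRep ι)
    (φ : X → X → (A →ₗ[ℂ] (H →L[ℂ] H)))
    (hbdd : ∃ C : ℝ, 0 ≤ C ∧ ∀ x y : X, CBBound (fun a => ι a) (fun T => T) (φ x y) C) :
    (PositiveType φ ↔
      (IsSchurMultiplier ι φ ∧ SchurCP ι φ ∧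
        schurNorm ι φ = ⨆ x : X, cbNorm (fun a => ι a) (fun T => T) (φ x x))) ∧
    (PositiveType φ ↔
      ∃ R : OpValuedRep A H X, NondegenerateRep R.ρ ∧
        (∃ C : ℝ, ∀ x : X, ‖R.V x‖ ≤ C) ∧ R.W = R.V ∧
        ∀ (x y : X) (a : A),
          φ x y a = (ContinuousLinearMap.adjoint (R.V x)) ∘L (R.ρ a) ∘L (R.V y)) ∧
    (PositiveType φ →
      ∃ Ψ : (lp (fun _ : X => H) 2 →L[ℂ] lp (fun _ : X => H) 2) →ₗ[ℂ]
            (lp (fun _ : X => H) 2 →L[ℂ] lp (fun _ : X => H) 2),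
        (∀ k : X × X → A, (Function.support k).Finite →
          Ψ (TKer ι k) = TOp (fun p => φ p.1 p.2 (k p))) ∧
        IsCompletelyPositive Ψ) := by
  exact positiveType_tfae_general ι
    (AddMonoidHomClass.isometry_of_norm ι hisom).injective φ hbdd

end
end

section
/- Let (A,G,α) be a C*-dynamical system with G discrete, and let T : G×A → A be linear in the second variable. Define F_T : G → CB(A) by F_T(t)(a) = T(t,a). Then T is positive definite in the sense of Bédos-Conti (i.e. for all n ∈ ℕ, s₁,...,s_n ∈ G and a₁,...,a_n ∈ A, the matrix (α_{s_i}(T(s_i⁻¹s_j, α_{s_i⁻¹}(a_i* a_j))))_{i,j} belongs to M_n(A)⁺) if and only if the function N(F_T) : G×G → CB(A) is of positive type. -/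
noncomputable section
open scoped ComplexOrder ENNReal
open Matrix

/-!
Since `Nᴴ * N = ∑ k, (star (N k p) * N k q)_{p,q}` and positive matrices over a C⋆-algebra are
closed under addition, an additive map preserves positivity of matrices as soon as it does so on
the matrices `(star (a p) * a q)_{p,q}`. The Bédos–Conti condition at `s₁, …, sₙ` is this test for
`N(F_T)` at the points `s₁⁻¹, …, sₙ⁻¹`.
-/

section MatPos

theorem conjTranspose_mul_self_eq_sum_vecMulVec {R : Type*} [NonUnitalNonAssocSemiring R]
    [Star R] {μ ν : Type*} [Fintype μ] (N : Matrix μ ν R) :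
    Nᴴ * N = ∑ k, vecMulVec (star (N k)) (N k) := by
  ext p q
  simp [mul_apply, Matrix.sum_apply, vecMulVec_apply]

variable {R : Type*} [NonUnitalSemiring R] [StarRing R] {ν : Type*} [Fintype ν]

theorem MatPos.zero : MatPos (0 : Matrix ν ν R) :=
  ⟨0, by simp⟩

theorem MatPos.vecMulVec_star_self (a : ν → R) : MatPos (vecMulVec (star a) a) := by
  classical
  rcases isEmpty_or_nonempty ν with _ | ⟨⟨i⟩⟩
  · exact ⟨0, Subsingleton.elim _ _⟩
  · refine ⟨updateRow 0 i a, ?_⟩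
    have summand_eq_zero (k : ν) (hk : k ≠ i) :
        vecMulVec (star (updateRow 0 i a k)) (updateRow 0 i a k) = 0 := by
      ext p q
      simp [updateRow_ne hk, vecMulVec_apply]
    rw [conjTranspose_mul_self_eq_sum_vecMulVec, Fintype.sum_eq_single i summand_eq_zero,
      updateRow_self]

variable {A : Type*} [NonUnitalCStarAlgebra A]

theorem exists_star_mul_self_eq_add (b c : A) :
    ∃ d : A, star b * b + star c * c = star d * d := by
  let : PartialOrder A := CStarAlgebra.spectralOrder A
  have : StarOrderedRing A := CStarAlgebra.spectralOrderedRing A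
  exact CStarAlgebra.nonneg_iff_eq_star_mul_self.1
    (add_nonneg (star_mul_self_nonneg b) (star_mul_self_nonneg c))

theorem MatPos.add {M N : Matrix ν ν A} (hM : MatPos M) (hN : MatPos N) : MatPos (M + N) := by
  -- The C⋆-algebra structure of `CStarMatrix ν ν A` depends on an order on `A`.
  let : PartialOrder A := CStarAlgebra.spectralOrder A
  have : StarOrderedRing A := CStarAlgebra.spectralOrderedRing A
  obtain ⟨B, rfl⟩ := hM
  obtain ⟨C, rfl⟩ := hN
  obtain ⟨D, hD⟩ := exists_star_mul_self_eq_add (CStarMatrix.ofMatrix B) (CStarMatrix.ofMatrix C)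
  exact ⟨CStarMatrix.ofMatrix.symm D, hD⟩

theorem MatPos.sum {κ : Type*} (S : Finset κ) {M : κ → Matrix ν ν A}
    (hM : ∀ k ∈ S, MatPos (M k)) : MatPos (∑ k ∈ S, M k) :=
  Finset.sum_induction M MatPos (fun _ _ => MatPos.add) MatPos.zero hM

theorem forall_matPos_map_iff_vecMulVec {μ : Type*} [Fintype μ]
    (Ψ : Matrix μ μ R →+ Matrix ν ν A) :
    (∀ M, MatPos M → MatPos (Ψ M)) ↔ ∀ a : μ → R, MatPos (Ψ (vecMulVec (star a) a)) := by
  constructor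
  · exact fun hΨ a => hΨ _ (MatPos.vecMulVec_star_self a)
  · rintro hΨ _ ⟨N, rfl⟩
    rw [conjTranspose_mul_self_eq_sum_vecMulVec, map_sum]
    exact MatPos.sum _ fun k _ => hΨ (N k)

end MatPos

/-- The Schur (entrywise) application of a matrix `φ` of additive maps to a matrix, bundled as an
additive map so that positivity of `φ` can be tested on rank-one matrices. -/
def schurMap {μ ν R S : Type*} [AddMonoid R] [AddMonoid S] (φ : μ → ν → R →+ S) :
    Matrix μ ν R →+ Matrix μ ν S where
  toFun M := of fun p q => φ p q (M p q)
  map_zero' := by ext; simp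
  map_add' M N := by ext; simp

section PositiveType

variable {A : Type*} [NonUnitalCStarAlgebra A]

theorem positiveTypeA_iff_star_mul {X : Type*} (φ : X → X → A →ₗ[ℂ] A) :
    PositiveTypeA φ ↔ ∀ (n : ℕ) (x : Fin n → X) (a : Fin n → A),
      MatPos (of fun i j => φ (x i) (x j) (star (a i) * a j)) :=
  forall₂_congr fun _ x =>
    forall_matPos_map_iff_vecMulVec (schurMap fun p q => (φ (x p) (x q)).toAddMonoidHom)

theorem NF_inv_inv_apply {G : Type*} [Group G] (α : G → A ≃⋆ₐ[ℂ] A) (F : G → A →ₗ[ℂ] A)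
    (s t : G) (a : A) : NF α F s⁻¹ t⁻¹ a = α s (F (s⁻¹ * t) (α s⁻¹ a)) := by
  simp [NF, autLin]

theorem BCPosDef_iff_NF_positiveType_general {G : Type*} [Group G]
    (α : G → A ≃⋆ₐ[ℂ] A) (T : G → (A →ₗ[ℂ] A)) :
    (∀ (n : ℕ) (s : Fin n → G) (a : Fin n → A),
      MatPos (Matrix.of fun i j : Fin n =>
        α (s i) (T ((s i)⁻¹ * s j) (α (s i)⁻¹ (star (a i) * a j))))) ↔
    PositiveTypeA (NF α T) := by
  simp only [positiveTypeA_iff_star_mul, ← NF_inv_inv_apply]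
  exact forall_congr' fun n => (Equiv.inv (Fin n → G)).forall_congr fun _ => Iff.rfl

end PositiveType

/-- **Bédos–Conti positive definiteness.** For `T : G × A → A`, linear in the second
variable (encoded as `T : G → (A →ₗ[ℂ] A)`, so that `F_T = T`), `T` is positive
definite in the sense of Bédos-Conti if and only if `N(F_T)` is of positive type. -/
theorem BCPosDef_iff_NF_positiveType
    {A : Type*} [NonUnitalCStarAlgebra A] {G : Type*} [Group G]
    (α : G → A ≃⋆ₐ[ℂ] A) (hα : IsAction α)
    (T : G → (A →ₗ[ℂ] A)) :
    (∀ (n : ℕ) (s : Fin n → G) (a : Fin n → A),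
      MatPos (Matrix.of fun i j : Fin n =>
        α (s i) (T ((s i)⁻¹ * s j) (α (s i)⁻¹ (star (a i) * a j))))) ↔
    PositiveTypeA (NF α T) :=
  BCPosDef_iff_NF_positiveType_general α T

end
end
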